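/- Let T = {(x₁,x₂) ∈ ℝ² : x₁ > 0, x₂ > 0, x₁ + x₂ < 1}, α, β, γ > −1, ρ(x₁,x₂) = x₁^α x₂^β (1−x₁−x₂)^γ, and Φ(x₁,x₂) = [[x₁(1−x₁), −x₁x₂], [−x₁x₂, x₂(1−x₂)]]. Then L²(T,ρ) admits an orthogonal basis {u_n}_{n≥0} consisting of weak eigenfunctions of the degenerate Helmholtz operator: each u_n ∈ W(T,ρ,ρΦ) and there is ν_n ∈ ℝ with ∫_T (∇v)ᵗ ρΦ ∇u_n dx₁dx₂ + ∫_T (2+x₁²+x₂²) u_n v ρ dx₁dx₂ = ν_n ∫_T u_n v ρ dx₁dx₂ for all v ∈ W(T,ρ,ρΦ); moreover every eigenvalue ν_n is positive and the sequence {ν_n} can be ordered so that ν_n → +∞. -/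

import Mathlib

open MeasureTheory Filter

noncomputable section

abbrev Poly2 := MvPolynomial (Fin 2) ℝ

/-- Evaluation of a two-variable real polynomial at a point of `ℝ × ℝ`. -/
def pev (p : Poly2) (x : ℝ × ℝ) : ℝ := MvPolynomial.eval ![x.1, x.2] p

/-- `uᵗ Φ v` where `Φ` is the matrix with polynomial entries `p11 p12 p21 p22`. -/
def bilPhi (p11 p12 p21 p22 : Poly2) (x u v : ℝ × ℝ) : ℝ :=
  u.1 * (pev p11 x * v.1 + pev p12 x * v.2) + u.2 * (pev p21 x * v.1 + pev p22 x * v.2)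

/-- The (classical) gradient of a two-variable polynomial. -/
def polyGrad (p : Poly2) (x : ℝ × ℝ) : ℝ × ℝ :=
  (pev (MvPolynomial.pderiv (0 : Fin 2) p) x, pev (MvPolynomial.pderiv (1 : Fin 2) p) x)

/-- `ρ` is a weight function on `Ω`. -/
def IsWeight (Ω : Set (ℝ × ℝ)) (ρ : ℝ × ℝ → ℝ) : Prop :=
  Measurable ρ ∧ (∀ᵐ x ∂(volume.restrict Ω), 0 < ρ x) ∧ IntegrableOn ρ Ω

/-- `ρ` is a moment weight function on `Ω`. -/
def IsMomentWeight (Ω : Set (ℝ × ℝ)) (ρ : ℝ × ℝ → ℝ) : Prop :=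
  Measurable ρ ∧ (∀ᵐ x ∂(volume.restrict Ω), 0 < ρ x) ∧
    ∀ m n : ℕ, IntegrableOn (fun x : ℝ × ℝ => |x.1| ^ m * |x.2| ^ n * ρ x) Ω

/-- `Φ` is symmetric and positive definite at every point of `Ω`. -/
def SymPosDef (Ω : Set (ℝ × ℝ)) (p11 p12 p21 p22 : Poly2) : Prop :=
  p12 = p21 ∧ ∀ x ∈ Ω, ∀ ζ : ℝ × ℝ, ζ ≠ 0 → 0 < bilPhi p11 p12 p21 p22 x ζ ζ

/-- `Φ` is symmetric, has entries of degree at most 2, and is positive definite on `Ω`. -/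
def GoodPhi (Ω : Set (ℝ × ℝ)) (p11 p12 p21 p22 : Poly2) : Prop :=
  SymPosDef Ω p11 p12 p21 p22 ∧ p11.totalDegree ≤ 2 ∧ p12.totalDegree ≤ 2 ∧
    p21.totalDegree ≤ 2 ∧ p22.totalDegree ≤ 2

/-- The Pearson equation `div(ρΦ) = ρ(ψ₁,ψ₂)` with explicit degree-one polynomials
`ψⱼ(x) = d_{j1} x₁ + d_{j2} x₂ + e_j` having linearly independent linear parts. -/
def PearsonWith (Ω : Set (ℝ × ℝ)) (ρ : ℝ × ℝ → ℝ) (p11 p12 p21 p22 : Poly2)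
    (d11 d12 d21 d22 e1 e2 : ℝ) : Prop :=
  ContDiffOn ℝ 1 ρ Ω ∧ d11 * d22 - d12 * d21 ≠ 0 ∧
    (∀ x ∈ Ω,
      fderiv ℝ (fun y => ρ y * pev p11 y) x (1, 0) +
        fderiv ℝ (fun y => ρ y * pev p21 y) x (0, 1) = ρ x * (d11 * x.1 + d12 * x.2 + e1)) ∧
    (∀ x ∈ Ω,
      fderiv ℝ (fun y => ρ y * pev p12 y) x (1, 0) +
        fderiv ℝ (fun y => ρ y * pev p22 y) x (0, 1) = ρ x * (d21 * x.1 + d22 * x.2 + e2))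

/-- The Pearson equation `div(ρΦ) = ρ(ψ₁,ψ₂)` for some admissible `ψ₁, ψ₂`. -/
def Pearson (Ω : Set (ℝ × ℝ)) (ρ : ℝ × ℝ → ℝ) (p11 p12 p21 p22 : Poly2) : Prop :=
  ∃ d11 d12 d21 d22 e1 e2 : ℝ, PearsonWith Ω ρ p11 p12 p21 p22 d11 d12 d21 d22 e1 e2

/-- `div(ρΦv)` for a pair of polynomials `v = (v1, v2)`. -/
def divRhoPhi (ρ : ℝ × ℝ → ℝ) (p11 p12 p21 p22 v1 v2 : Poly2) (x : ℝ × ℝ) : ℝ :=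
  fderiv ℝ (fun y => ρ y * (pev p11 y * pev v1 y + pev p12 y * pev v2 y)) x (1, 0) +
    fderiv ℝ (fun y => ρ y * (pev p21 y * pev v1 y + pev p22 y * pev v2 y)) x (0, 1)

/-- Membership in `L²(Ω, ρ)`. -/
def MemL2 (Ω : Set (ℝ × ℝ)) (ρ : ℝ × ℝ → ℝ) (u : ℝ × ℝ → ℝ) : Prop :=
  Measurable u ∧ IntegrableOn (fun x => u x ^ 2 * ρ x) Ω

/-- Membership in the matrix-weighted Lebesgue space `L²(Ω, ρΦ)`. -/
def MemL2M (Ω : Set (ℝ × ℝ)) (ρ : ℝ × ℝ → ℝ) (p11 p12 p21 p22 : Poly2)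
    (w : ℝ × ℝ → ℝ × ℝ) : Prop :=
  Measurable w ∧ IntegrableOn (fun x => ρ x * bilPhi p11 p12 p21 p22 x (w x) (w x)) Ω

/-- `h` is a weak gradient of `u`. -/
def IsWeakGrad (Ω : Set (ℝ × ℝ)) (ρ : ℝ × ℝ → ℝ) (p11 p12 p21 p22 : Poly2)
    (u : ℝ × ℝ → ℝ) (h : ℝ × ℝ → ℝ × ℝ) : Prop :=
  MemL2M Ω ρ p11 p12 p21 p22 h ∧
    ∀ v1 v2 : Poly2,
      ∫ x in Ω, u x * divRhoPhi ρ p11 p12 p21 p22 v1 v2 x =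
        - ∫ x in Ω, ρ x * bilPhi p11 p12 p21 p22 x (h x) (pev v1 x, pev v2 x)

/-- Membership in `W(Ω, ρ, ρΦ)`, the closure of the polynomials in `W^{1,2}(Ω, ρ, ρΦ)`,
for a function `u` with weak gradient `g`. -/
def MemW (Ω : Set (ℝ × ℝ)) (ρ : ℝ × ℝ → ℝ) (p11 p12 p21 p22 : Poly2)
    (u : ℝ × ℝ → ℝ) (g : ℝ × ℝ → ℝ × ℝ) : Prop :=
  MemL2 Ω ρ u ∧ IsWeakGrad Ω ρ p11 p12 p21 p22 u g ∧
    ∀ ε : ℝ, 0 < ε → ∃ q : Poly2,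
      (∫ x in Ω, (u x - pev q x) ^ 2 * ρ x) +
        (∫ x in Ω, ρ x * bilPhi p11 p12 p21 p22 x (g x - polyGrad q x) (g x - polyGrad q x))
          < ε ^ 2

/-- The open triangle with vertices `(0,0)`, `(1,0)`, `(0,1)`. -/
def Ttri : Set (ℝ × ℝ) := {x : ℝ × ℝ | 0 < x.1 ∧ 0 < x.2 ∧ x.1 + x.2 < 1}

/-- The Jacobi-type weight `ρ(x) = x₁^α x₂^β (1−x₁−x₂)^γ`. -/
def rhoT (α β γ : ℝ) (x : ℝ × ℝ) : ℝ :=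
  x.1 ^ α * x.2 ^ β * (1 - x.1 - x.2) ^ γ

/-- The entry `φ₁₁ = x₁(1−x₁)` of the triangle matrix `Φ`. -/
def q11 : Poly2 := MvPolynomial.X 0 * (1 - MvPolynomial.X 0)

/-- The entry `φ₁₂ = φ₂₁ = −x₁x₂` of the triangle matrix `Φ`. -/
def q12 : Poly2 := -(MvPolynomial.X 0 * MvPolynomial.X 1)

/-- The entry `φ₂₂ = x₂(1−x₂)` of the triangle matrix `Φ`. -/
def q22 : Poly2 := MvPolynomial.X 1 * (1 - MvPolynomial.X 1)

/-- The classical gradient of a function of two variables. -/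
def gradF (u : ℝ × ℝ → ℝ) (x : ℝ × ℝ) : ℝ × ℝ :=
  (fderiv ℝ u x (1, 0), fderiv ℝ u x (0, 1))

theorem exists_order_enum {ι : Type*} [Infinite ι] (ν : ι → ℝ)
    (hfin : ∀ R : ℝ, {i | ν i ≤ R}.Finite) :
    ∃ e : ℕ ≃ ι, Monotone (ν ∘ e) := by
  have hc : Countable ι := by
    have : (Set.univ : Set ι) = ⋃ n : ℕ, {i | ν i ≤ n} := by
      ext i
      simp only [Set.mem_univ, Set.mem_iUnion, Set.mem_ofPred_eq, true_iff]
      exact exists_nat_ge (ν i)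
    rw [← Set.countable_univ_iff, this]
    exact Set.countable_iUnion fun n => (hfin n).countable
  obtain ⟨f, hf⟩ := hc.exists_injective_nat
  let g : ι → ℝ ×ₗ ℕ := fun i => toLex (ν i, f i)
  have hg : Function.Injective g := fun i j h => hf (by simpa [g] using (congrArg (fun z => (ofLex z).2) h))
  letI : LinearOrder ι := LinearOrder.lift' g hg
  have hle : ∀ i j : ι, i ≤ j → ν i ≤ ν j := by
    intro i j h
    have h' : g i ≤ g j := h
    rcases Prod.Lex.toLex_le_toLex.1 h' with h1 | h1
    · exact h1.le
    · exact h1.1.le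
  have hIic : ∀ i : ι, (Set.Iic i).Finite := fun i => (hfin (ν i)).subset fun j hj => hle j i hj
  letI : LocallyFiniteOrder ι := LocallyFiniteOrder.ofFiniteIcc
    fun a b => (hIic b).subset fun x hx => hx.2
  obtain ⟨i0⟩ := (inferInstance : Nonempty ι)
  obtain ⟨m, hm⟩ := (hIic i0).exists_minimal ⟨i0, le_refl i0⟩
  have hbot : ∀ a, m ≤ a := by
    intro a
    by_contra h
    rw [not_le] at h
    have := hm.2 (y := a) (h.le.trans hm.1) h.le
    exact absurd h (not_lt.2 this)
  letI : OrderBot ι := { bot := m, bot_le := hbot }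
  haveI : NoMaxOrder ι := ⟨by
    intro a
    by_contra h
    push Not at h
    exact Set.infinite_univ ((hIic a).subset fun x _ => h x)⟩
  letI : SuccOrder ι := LinearLocallyFiniteOrder.succOrder ι
  letI : PredOrder ι := LinearLocallyFiniteOrder.predOrder ι
  let e := (orderIsoNatOfLinearSuccPredArch (ι := ι))
  refine ⟨e.symm.toEquiv, fun a b hab => hle _ _ (e.symm.monotone hab)⟩

open Module.End in
theorem abstract_basis {H W : Type*} [NormedAddCommGroup H] [InnerProductSpace ℝ H] [CompleteSpace H]
    [NormedAddCommGroup W] [InnerProductSpace ℝ W] [CompleteSpace W]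
    (J : W →L[ℝ] H) (hJ : IsCompactOperator J) (hd : DenseRange J)
    (hinf : ¬ FiniteDimensional ℝ H) :
    ∃ (y : ℕ → W) (ν : ℕ → ℝ), Orthonormal ℝ (fun n => J (y n)) ∧
      (∀ n z, inner ℝ (y n) z = ν n * inner ℝ (J (y n)) (J z)) ∧
      (∀ n, 0 < ν n) ∧ Monotone ν ∧ Tendsto ν atTop atTop ∧
      (Submodule.span ℝ (Set.range fun n => J (y n))).topologicalClosure = ⊤ := by
  let A := ContinuousLinearMap.adjoint J
  let K : H →L[ℝ] H := J ∘L A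
  have hKin : ∀ x y, inner ℝ (K x) y = inner ℝ (A x) (A y) := by
    intro x y
    change inner ℝ (J (A x)) y = _
    rw [← ContinuousLinearMap.adjoint_inner_right]
  have hKc : IsCompactOperator K := hJ.comp_clm A
  have hKs : K.IsSymmetric := by
    intro x y
    change inner ℝ (K x) y = inner ℝ x (K y)
    rw [hKin, real_inner_comm, ← hKin, real_inner_comm]
  have hAinj : ∀ x, A x = 0 → x = 0 := by
    intro x hx
    have h0 : ∀ w, inner ℝ x (J w) = 0 := by
      intro w
      rw [← ContinuousLinearMap.adjoint_inner_left]
      change inner ℝ (A x) w = 0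
      simp [hx]
    have : ∀ z, inner ℝ x z = 0 := by
      intro z
      exact hd.induction_on (p := fun z => inner ℝ x z = 0) z
        (isClosed_eq (by fun_prop) (by fun_prop)) h0
    exact inner_self_eq_zero.1 (this x)
  -- eigenvalues positive
  have hpos : ∀ (k : ℝ) (x : H), x ≠ 0 → K x = k • x → 0 < k := by
    intro k x hx h
    have h1 := hKin x x
    rw [h, inner_smul_left, real_inner_self_eq_norm_sq, real_inner_self_eq_norm_sq] at h1
    have h2 : 0 < ‖A x‖ ^ 2 := by
      have : A x ≠ 0 := fun h => hx (hAinj x h)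
      positivity
    have h3 : 0 < ‖x‖ ^ 2 := by positivity
    simp only [conj_trivial] at h1
    rw [← h1] at h2
    exact (mul_pos_iff_of_pos_right h3).1 h2
  let KL : Module.End ℝ H := (K : H →ₗ[ℝ] H)
  have hfd : ∀ k : ℝ, FiniteDimensional ℝ (eigenspace KL k) := by
    intro k
    by_cases hk : k = 0
    · have : eigenspace KL k = ⊥ := by
        rw [eq_bot_iff]
        intro x hx
        rw [mem_eigenspace_iff] at hx
        by_contra hx0
        exact (hpos k x hx0 hx).ne' hk
      rw [this]; infer_instance
    · exact ContinuousLinearMap.finite_dimensional_eigenspace hKc k hk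
  let ι := Σ k : ℝ, Fin (Module.finrank ℝ (eigenspace KL k))
  let e : ι → H := fun i => (stdOrthonormalBasis ℝ (eigenspace KL i.1) i.2 : H)
  have heo : Orthonormal ℝ e := by
    have := (LinearMap.IsSymmetric.orthogonalFamily_eigenspaces hKs)
    exact this.orthonormal_sigma_orthonormal (v_family := fun k => stdOrthonormalBasis ℝ (eigenspace KL k))
      (fun k => (stdOrthonormalBasis ℝ (eigenspace KL k)).orthonormal)
  have heK : ∀ i : ι, K (e i) = i.1 • e i := by
    intro i
    exact mem_eigenspace_iff.1 (stdOrthonormalBasis ℝ (eigenspace KL i.1) i.2).2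
  have hkpos : ∀ i : ι, 0 < i.1 := fun i => hpos i.1 (e i) (heo.ne_zero i) (heK i)
  have hspan : (Submodule.span ℝ (Set.range e)).topologicalClosure = ⊤ := by
    rw [Submodule.topologicalClosure_eq_top_iff, eq_bot_iff,
      ← ContinuousLinearMap.orthogonalComplement_iSup_eigenspaces_eq_bot hKc hKs]
    apply Submodule.orthogonal_le
    apply iSup_le
    intro k x hx
    have h1 := (stdOrthonormalBasis ℝ (eigenspace KL k)).sum_repr ⟨x, hx⟩
    have h2 := congrArg (Submodule.subtype _) h1
    rw [map_sum] at h2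
    simp only [map_smul, Submodule.subtype_apply] at h2
    rw [← h2]
    exact Submodule.sum_mem _ fun j _ => Submodule.smul_mem _ _ (Submodule.subset_span ⟨⟨k, j⟩, rfl⟩)
  have hfin : ∀ R : ℝ, {i : ι | (i.1)⁻¹ ≤ R}.Finite := by
    intro R
    by_contra hnf
    have hnf' : Set.Infinite {i : ι | (i.1)⁻¹ ≤ R} := hnf
    let s := hnf'.natEmbedding
    have hRpos : 0 < R := lt_of_lt_of_le (inv_pos.2 (hkpos (s 0))) (s 0).2
    obtain ⟨C, hC, hCs⟩ := hKc.image_closedBall_subset_compact (𝕜₁ := ℝ) (f := KL) 1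
    have hm : ∀ n, K (e (s n)) ∈ C := fun n => hCs ⟨e (s n), by simp [heo.1], rfl⟩
    obtain ⟨a, -, φ, hφ, hlim⟩ := hC.tendsto_subseq hm
    have hcau := hlim.cauchySeq
    rw [Metric.cauchySeq_iff'] at hcau
    obtain ⟨N, hN⟩ := hcau (R⁻¹) (inv_pos.2 hRpos)
    have h1 := hN (N+1) (Nat.le_succ N)
    simp only [Function.comp, dist_eq_norm, heK] at h1
    have hne : (s (φ (N+1))).1 ≠ (s (φ N)).1 := by
      intro h
      have := hφ.injective (s.injective (Subtype.ext h))
      omega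
    set i : ι := (s (φ (N+1))).1 with hi
    set j : ι := (s (φ N)).1 with hj
    have hge : R⁻¹ ≤ i.1 := by
      have : (i.1)⁻¹ ≤ R := (s (φ (N+1))).2
      exact inv_le_of_inv_le₀ (hkpos i) this
    have h2 : inner ℝ (e i) (i.1 • e i - j.1 • e j) = i.1 := by
      rw [inner_sub_right, inner_smul_right, inner_smul_right, heo.2 hne,
        real_inner_self_eq_norm_sq, heo.1]; simp
    have h3 := real_inner_le_norm (e i) (i.1 • e i - j.1 • e j)
    rw [h2, heo.1, one_mul] at h3
    linarith
  have hιinf : Infinite ι := by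
    by_contra hni
    rw [not_infinite_iff_finite] at hni
    apply hinf
    have hf : (Set.range e).Finite := Set.finite_range e
    have : FiniteDimensional ℝ (Submodule.span ℝ (Set.range e)) := FiniteDimensional.span_of_finite ℝ hf
    have hcl : IsClosed (Submodule.span ℝ (Set.range e) : Set H) := Submodule.closed_of_finiteDimensional _
    rw [hcl.submodule_topologicalClosure_eq] at hspan
    rw [hspan] at this
    exact Module.Finite.equiv (Submodule.topEquiv (R := ℝ) (M := H))
  obtain ⟨en, hmono⟩ := exists_order_enum (fun i : ι => (i.1)⁻¹) hfin
  have hJy : ∀ n, J (((en n).1)⁻¹ • A (e (en n))) = e (en n) := by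
    intro n
    rw [map_smul]
    change _ • K (e (en n)) = _
    rw [heK, smul_smul, inv_mul_cancel₀ (hkpos _).ne', one_smul]
  refine ⟨fun n => ((en n).1)⁻¹ • A (e (en n)), fun n => ((en n).1)⁻¹, ?_, ?_, ?_, hmono, ?_, ?_⟩
  · simp only [hJy]
    exact heo.comp en en.injective
  · intro n z
    simp only [hJy]
    rw [inner_smul_left, ContinuousLinearMap.adjoint_inner_left]
    simp
  · intro n
    exact inv_pos.2 (hkpos _)
  · apply tendsto_atTop_atTop_of_monotone hmono
    intro b
    by_contra h
    push Not at h
    have := (hfin b).preimage (f := en) en.injective.injOn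
    exact Set.infinite_univ (this.subset fun n _ => (h n).le)
  · simp only [hJy]
    have : (Set.range fun n => e (en n)) = Set.range e := en.surjective.range_comp e
    rw [this]; exact hspan

theorem pev_continuous (p : Poly2) : Continuous (pev p) := by
  unfold pev
  have h : Continuous fun x : ℝ × ℝ => (![x.1, x.2] : Fin 2 → ℝ) := by
    refine continuous_pi fun i => ?_
    fin_cases i
    · exact continuous_fst
    · exact continuous_snd
  exact (MvPolynomial.continuous_eval p).comp h

theorem pev_add (p q : Poly2) (x) : pev (p + q) x = pev p x + pev q x := by simp [pev]
theorem pev_sub (p q : Poly2) (x) : pev (p - q) x = pev p x - pev q x := by simp [pev]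
theorem pev_mul (p q : Poly2) (x) : pev (p * q) x = pev p x * pev q x := by simp [pev]
theorem pev_neg (p : Poly2) (x) : pev (-p) x = - pev p x := by simp [pev]
theorem pev_C (c : ℝ) (x) : pev (MvPolynomial.C c) x = c := by simp [pev]
theorem pev_smul (c : ℝ) (p : Poly2) (x) : pev (c • p) x = c * pev p x := by simp [pev]
theorem pev_X0 (x) : pev (MvPolynomial.X 0) x = x.1 := by simp [pev]
theorem pev_X1 (x) : pev (MvPolynomial.X 1) x = x.2 := by simp [pev]
theorem pev_one (x) : pev 1 x = 1 := by simp [pev]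
theorem pev_zero (x) : pev 0 x = 0 := by simp [pev]
theorem pev_q11 (x) : pev q11 x = x.1 * (1 - x.1) := by simp [q11, pev]
theorem pev_q12 (x) : pev q12 x = -(x.1 * x.2) := by simp [q12, pev]
theorem pev_q22 (x) : pev q22 x = x.2 * (1 - x.2) := by simp [q22, pev]

theorem pev_hasFDerivAt (p : Poly2) (x : ℝ × ℝ) :
    HasFDerivAt (pev p) (pev (MvPolynomial.pderiv 0 p) x • ContinuousLinearMap.fst ℝ ℝ ℝ +
      pev (MvPolynomial.pderiv 1 p) x • ContinuousLinearMap.snd ℝ ℝ ℝ) x := by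
  induction p using MvPolynomial.induction_on with
  | C a =>
    have : pev (MvPolynomial.C a) = fun _ => a := by ext y; exact pev_C a y
    rw [this]
    simpa [pev_zero] using hasFDerivAt_const a x
  | add p q hp hq =>
    have : pev (p + q) = fun y => pev p y + pev q y := by ext y; exact pev_add p q y
    rw [this]
    refine (hp.add hq).congr_fderiv ?_
    ext <;> simp [pev_add]
  | mul_X p i hp =>
    have : pev (p * MvPolynomial.X i) = fun y => pev p y * pev (MvPolynomial.X i) y := by
      ext y; exact pev_mul p _ y
    rw [this]
    fin_cases i
    · have h0 : HasFDerivAt (pev (MvPolynomial.X 0)) (ContinuousLinearMap.fst ℝ ℝ ℝ) x := by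
        have : pev (MvPolynomial.X 0) = Prod.fst := by ext y; exact pev_X0 y
        rw [this]; exact hasFDerivAt_fst
      refine (hp.mul h0).congr_fderiv ?_
      ext <;> simp [pev_mul, pev_add, pev_X0, pev_X1, pev_one, pev_zero, MvPolynomial.pderiv_X] <;> ring
    · have h0 : HasFDerivAt (pev (MvPolynomial.X 1)) (ContinuousLinearMap.snd ℝ ℝ ℝ) x := by
        have : pev (MvPolynomial.X 1) = Prod.snd := by ext y; exact pev_X1 y
        rw [this]; exact hasFDerivAt_snd
      refine (hp.mul h0).congr_fderiv ?_
      ext <;> simp [pev_mul, pev_add, pev_X0, pev_X1, pev_one, pev_zero, MvPolynomial.pderiv_X] <;> ring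

theorem Ttri_open : IsOpen Ttri := by
  unfold Ttri
  exact (isOpen_lt continuous_const continuous_fst).inter
    ((isOpen_lt continuous_const continuous_snd).inter
      (isOpen_lt (continuous_fst.add continuous_snd) continuous_const))

theorem Ttri_meas : MeasurableSet Ttri := Ttri_open.measurableSet

theorem rhoT_pos {a b c : ℝ} {x : ℝ × ℝ} (hx : x ∈ Ttri) : 0 < rhoT a b c x := by
  obtain ⟨h1, h2, h3⟩ := hx
  unfold rhoT
  have : 0 < 1 - x.1 - x.2 := by linarith
  positivity

theorem rhoT_meas (a b c : ℝ) : Measurable (rhoT a b c) := by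
  unfold rhoT
  fun_prop

theorem rpow_bd {a t : ℝ} (h1 : 1 / 3 ≤ t) (h2 : t ≤ 1) : t ^ a ≤ 3 ^ |a| := by
  have h0 : 0 < t := by linarith
  calc t ^ a ≤ t ^ (-|a|) := Real.rpow_le_rpow_of_exponent_ge h0 h2 (neg_abs_le a)
    _ = (t⁻¹) ^ |a| := by rw [Real.rpow_neg h0.le, Real.inv_rpow h0.le]
    _ ≤ 3 ^ |a| := by
      apply Real.rpow_le_rpow (by positivity) _ (abs_nonneg a)
      rw [inv_le_comm₀ h0 (by norm_num)]; linarith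

def sigF (x : ℝ × ℝ) : ℝ × ℝ := (x.1, 1 - x.1 - x.2)

theorem sigF_meas : Measurable sigF := by unfold sigF; fun_prop

theorem sigF_inv : Function.Involutive sigF := fun x => by simp [sigF]

theorem sigF_mp : MeasurePreserving sigF := by
  have := MeasurePreserving.skew_product (μa := (volume : Measure ℝ)) (μc := (volume : Measure ℝ))
    (μb := (volume : Measure ℝ)) (μd := (volume : Measure ℝ)) (f := id)
    (g := fun x y => 1 - x - y) (MeasurePreserving.id _) (by fun_prop)
    (Eventually.of_forall fun x => (Measure.measurePreserving_sub_left volume (1 - x)).map_eq)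
  exact this

noncomputable def powI (a : ℝ) : ℝ → ℝ := (Set.Ioo 0 1).indicator (fun x => x ^ a)

theorem powI_int {a : ℝ} (ha : -1 < a) : Integrable (powI a) := by
  unfold powI
  rw [integrable_indicator_iff measurableSet_Ioo]
  have := intervalIntegral.intervalIntegrable_rpow' (a := 0) (b := 1) ha
  rwa [intervalIntegrable_iff_integrableOn_Ioo_of_le zero_le_one] at this

theorem rhoT_int {a b c : ℝ} (ha : -1 < a) (hb : -1 < b) (hc : -1 < c) :
    IntegrableOn (rhoT a b c) Ttri := by
  have hab : Integrable (fun x : ℝ × ℝ => powI a x.1 * powI b x.2) := (powI_int ha).mul_prod (powI_int hb)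
  have hac0 : Integrable (fun x : ℝ × ℝ => powI a x.1 * powI c x.2) := (powI_int ha).mul_prod (powI_int hc)
  have hbc0 : Integrable (fun x : ℝ × ℝ => powI b x.1 * powI c x.2) := (powI_int hb).mul_prod (powI_int hc)
  have hac : Integrable (fun x : ℝ × ℝ => powI a x.1 * powI c (1 - x.1 - x.2)) :=
    sigF_mp.integrable_comp_of_integrable hac0
  have hsw : MeasurePreserving (Prod.swap : ℝ × ℝ → ℝ × ℝ) volume volume :=
    Measure.measurePreserving_swap
  have hbc : Integrable (fun x : ℝ × ℝ => powI b x.2 * powI c (1 - x.2 - x.1)) :=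
    (sigF_mp.comp hsw).integrable_comp_of_integrable hbc0
  have hG := ((hbc.const_mul (3 ^ |a|)).add (hac.const_mul (3 ^ |b|))).add (hab.const_mul (3 ^ |c|))
  refine Integrable.mono' hG.integrableOn (rhoT_meas a b c).aestronglyMeasurable ?_
  rw [ae_restrict_iff' Ttri_meas]
  refine Eventually.of_forall fun x hx => ?_
  rw [Real.norm_of_nonneg (rhoT_pos hx).le]
  obtain ⟨h1, h2, h3⟩ := hx
  have e1 : powI a x.1 = x.1 ^ a := Set.indicator_of_mem (by constructor <;> linarith) _
  have e2 : powI b x.2 = x.2 ^ b := Set.indicator_of_mem (by constructor <;> linarith) _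
  have e3 : powI c (1 - x.1 - x.2) = (1 - x.1 - x.2) ^ c :=
    Set.indicator_of_mem (by constructor <;> linarith) _
  have e4 : 1 - x.2 - x.1 = 1 - x.1 - x.2 := by ring
  simp only [Pi.add_apply, e4, e1, e2, e3]
  unfold rhoT
  have p3 : 0 < 1 - x.1 - x.2 := by linarith
  have q1 : 0 < x.1 ^ a := by positivity
  have q2 : 0 < x.2 ^ b := by positivity
  have q3 : 0 < (1 - x.1 - x.2) ^ c := by positivity
  have r1 : (0:ℝ) < 3 ^ |a| := by positivity
  have r2 : (0:ℝ) < 3 ^ |b| := by positivity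
  have r3 : (0:ℝ) < 3 ^ |c| := by positivity
  generalize hA : (3:ℝ) ^ |a| = A at *
  generalize hB : (3:ℝ) ^ |b| = B at *
  generalize hC : (3:ℝ) ^ |c| = C at *
  rcases le_total (1/3) x.1 with hx1 | hx1
  · have := rpow_bd (a := a) hx1 (by linarith)
    rw [hA] at this
    have := mul_le_mul_of_nonneg_right this (mul_pos q2 q3).le
    have := mul_pos (mul_pos q1 q3) r2
    have := mul_pos (mul_pos q1 q2) r3
    linarith
  · rcases le_total (1/3) x.2 with hx2 | hx2
    · have := rpow_bd (a := b) hx2 (by linarith)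
      rw [hB] at this
      have := mul_le_mul_of_nonneg_right this (mul_pos q1 q3).le
      have := mul_pos (mul_pos q2 q3) r1
      have := mul_pos (mul_pos q1 q2) r3
      linarith
    · have := rpow_bd (a := c) (t := 1 - x.1 - x.2) (by linarith) (by linarith)
      rw [hC] at this
      have := mul_le_mul_of_nonneg_right this (mul_pos q1 q2).le
      have := mul_pos (mul_pos q2 q3) r1
      have := mul_pos (mul_pos q1 q3) r2
      linarith

theorem rhoT_mul_int {a b c : ℝ} (ha : -1 < a) (hb : -1 < b) (hc : -1 < c) {m : ℝ × ℝ → ℝ}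
    (hm : Continuous m) : IntegrableOn (fun x => rhoT a b c x * m x) Ttri := by
  refine (rhoT_int ha hb hc).mul_continuousOn_of_subset (K := Set.Icc 0 1 ×ˢ Set.Icc 0 1)
    hm.continuousOn Ttri_meas (isCompact_Icc.prod isCompact_Icc) ?_
  rintro x ⟨h1, h2, h3⟩
  refine ⟨⟨?_, ?_⟩, ⟨?_, ?_⟩⟩ <;> linarith

theorem ibp_base {a b c : ℝ} (ha : -1 < a) (hb : -1 < b) (hc : -1 < c) {r r1 : ℝ × ℝ → ℝ}
    (hr : Continuous r) (hr1 : Continuous r1)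
    (hd : ∀ x y, HasDerivAt (fun t => r (t, y)) (r1 (x, y)) x) :
    ∫ x in Ttri, rhoT a b c x * ((a + 1) * (1 - x.1 - x.2) * r x - (c + 1) * x.1 * r x +
      x.1 * (1 - x.1 - x.2) * r1 x) = 0 := by
  have hi := rhoT_mul_int ha hb hc (m := fun x => ((a + 1) * (1 - x.1 - x.2) * r x - (c + 1) * x.1 * r x +
      x.1 * (1 - x.1 - x.2) * r1 x)) (by fun_prop)
  rw [← integral_indicator Ttri_meas]
  rw [← integrable_indicator_iff Ttri_meas] at hi
  rw [show (volume : Measure (ℝ × ℝ)) = volume.prod volume from rfl] at hi ⊢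
  rw [integral_prod_symm _ hi]
  convert integral_zero ℝ ℝ with y
  by_cases hy : 0 < y ∧ y < 1
  · have key : ∀ x, Ttri.indicator (fun x => rhoT a b c x * ((a + 1) * (1 - x.1 - x.2) * r x -
        (c + 1) * x.1 * r x + x.1 * (1 - x.1 - x.2) * r1 x)) (x, y) =
        (Set.Ioo 0 (1 - y)).indicator (fun x => y ^ b * (((a + 1) * x ^ a * (1 - x - y) ^ (c + 1) +
          x ^ (a + 1) * (-(c + 1) * (1 - x - y) ^ c)) * r (x, y) +
          x ^ (a + 1) * (1 - x - y) ^ (c + 1) * r1 (x, y))) x := by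
      intro x
      by_cases hx : x ∈ Set.Ioo 0 (1 - y)
      · rw [Set.indicator_of_mem hx, Set.indicator_of_mem (show (x, y) ∈ Ttri from
          ⟨hx.1, hy.1, by have := hx.2; simp only; linarith⟩)]
        have h1 : x ≠ 0 := hx.1.ne'
        have h2 : 1 - x - y ≠ 0 := by have := hx.2; intro h; linarith
        simp only [rhoT, Real.rpow_add_one h1, Real.rpow_add_one h2]
        ring
      · rw [Set.indicator_of_notMem hx, Set.indicator_of_notMem]
        rintro ⟨h1, h2, h3⟩
        simp only at h1 h2 h3
        exact hx ⟨h1, by linarith⟩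
    simp_rw [key]
    rw [integral_indicator measurableSet_Ioo, ← integral_Ioc_eq_integral_Ioo,
      ← intervalIntegral.integral_of_le (by linarith), intervalIntegral.integral_const_mul]
    set F' : ℝ → ℝ := fun x => (((a + 1) * x ^ a * (1 - x - y) ^ (c + 1) +
          x ^ (a + 1) * (-(c + 1) * (1 - x - y) ^ c)) * r (x, y) +
          x ^ (a + 1) * (1 - x - y) ^ (c + 1) * r1 (x, y)) with hF'
    by_cases hint : IntervalIntegrable F' volume 0 (1 - y)
    · rw [intervalIntegral.integral_eq_sub_of_hasDerivAt_of_le (a := 0) (b := 1 - y)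
        (f := fun x => x ^ (a + 1) * (1 - x - y) ^ (c + 1) * r (x, y)) (by linarith) ?_ ?_ hint]
      · have : (1 - (1 - y) - y) = 0 := by ring
        rw [this, Real.zero_rpow (by linarith), Real.zero_rpow (by linarith)]; simp
      · refine Continuous.continuousOn ?_
        refine ((continuous_id.rpow_const fun x => Or.inr (by linarith)).mul
          (Continuous.rpow_const (by fun_prop) fun x => Or.inr (by linarith))).mul (by fun_prop)
      · intro x hx
        have h1 : x ≠ 0 := hx.1.ne'
        have h2 : 1 - x - y ≠ 0 := by have := hx.2; intro h; linarith
        have d1 : HasDerivAt (fun x : ℝ => x ^ (a + 1)) ((a + 1) * x ^ a) x := by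
          have := Real.hasDerivAt_rpow_const (x := x) (p := a + 1) (Or.inl h1)
          simpa using this
        have d0 : HasDerivAt (fun x : ℝ => 1 - x - y) (-1) x := by
          simpa using ((hasDerivAt_id x).const_sub 1).sub_const y
        have d2 : HasDerivAt (fun x : ℝ => (1 - x - y) ^ (c + 1)) (-(c + 1) * (1 - x - y) ^ c) x := by
          have := d0.rpow_const (p := c + 1) (Or.inl h2)
          convert this using 1
          simp
        exact (d1.mul d2).mul (hd x y)
    · rw [intervalIntegral.integral_undef hint, mul_zero]
  · have : ∀ x, (x, y) ∉ Ttri := by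
      rintro x ⟨h1, h2, h3⟩
      simp only at h1 h2 h3
      exact hy ⟨h2, by linarith⟩
    simp [this]

open MvPolynomial in
/-- The divergence polynomial. -/
noncomputable def Epol (α β γ : ℝ) (v w : Poly2) : Poly2 :=
  (C (α + 1) - C (α + β + γ + 3) * X 0) * v + (C (β + 1) - C (α + β + γ + 3) * X 1) * w
    + q11 * pderiv 0 v + q12 * (pderiv 0 w + pderiv 1 v) + q22 * pderiv 1 w

theorem pev_Epol (α β γ : ℝ) (v w : Poly2) (x : ℝ × ℝ) : pev (Epol α β γ v w) x =
    ((α + 1) - (α + β + γ + 3) * x.1) * pev v x + ((β + 1) - (α + β + γ + 3) * x.2) * pev w x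
    + x.1 * (1 - x.1) * pev (MvPolynomial.pderiv 0 v) x
    - x.1 * x.2 * (pev (MvPolynomial.pderiv 0 w) x + pev (MvPolynomial.pderiv 1 v) x)
    + x.2 * (1 - x.2) * pev (MvPolynomial.pderiv 1 w) x := by
  simp only [Epol, pev_add, pev_mul, pev_sub, pev_C, pev_X0, pev_X1, pev_q11, pev_q12, pev_q22]
  ring

theorem pev_hasDerivAt0 (p : Poly2) (x y : ℝ) :
    HasDerivAt (fun t => pev p (t, y)) (pev (MvPolynomial.pderiv 0 p) (x, y)) x := by
  have h := (pev_hasFDerivAt p (x, y)).comp_hasDerivAt x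
    ((hasDerivAt_id x).prodMk (hasDerivAt_const x y))
  simpa [Function.comp_def] using h

theorem pev_hasDerivAt1 (p : Poly2) (x y : ℝ) :
    HasDerivAt (fun t => pev p (y, t)) (pev (MvPolynomial.pderiv 1 p) (y, x)) x := by
  have h := (pev_hasFDerivAt p (y, x)).comp_hasDerivAt x
    ((hasDerivAt_const x y).prodMk (hasDerivAt_id x))
  simpa [Function.comp_def] using h

theorem pev_hasDerivAt2 (p : Poly2) (x y : ℝ) :
    HasDerivAt (fun t => pev p (t, 1 - t - y)) (pev (MvPolynomial.pderiv 0 p) (x, 1 - x - y) -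
      pev (MvPolynomial.pderiv 1 p) (x, 1 - x - y)) x := by
  have h := (pev_hasFDerivAt p (x, 1 - x - y)).comp_hasDerivAt x
    ((hasDerivAt_id x).prodMk (((hasDerivAt_id x).const_sub 1).sub_const y))
  simpa [Function.comp_def, sub_eq_add_neg] using h

theorem setInt_involutive {s : ℝ × ℝ → ℝ × ℝ} (hs : MeasurePreserving s) (hm : Measurable s)
    (hi : Function.Involutive s) (hT : ∀ x, s x ∈ Ttri ↔ x ∈ Ttri) (f : ℝ × ℝ → ℝ) :
    ∫ x in Ttri, f (s x) = ∫ x in Ttri, f x := by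
  have he : MeasurableEmbedding s := (MeasurableEquiv.ofInvolutive s hi hm).measurableEmbedding
  have hp : s ⁻¹' Ttri = Ttri := by ext x; exact hT x
  have := hs.setIntegral_preimage_emb he f Ttri
  rwa [hp] at this

theorem ibp_E {α β γ : ℝ} (hα : -1 < α) (hβ : -1 < β) (hγ : -1 < γ) (v w : Poly2) :
    ∫ x in Ttri, rhoT α β γ x * pev (Epol α β γ v w) x = 0 := by
  have c0 := fun p : Poly2 => pev_continuous p
  have h1 := ibp_base hα hβ hγ (r := pev v) (r1 := pev (MvPolynomial.pderiv 0 v)) (c0 _) (c0 _)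
    (pev_hasDerivAt0 v)
  have h2 := ibp_base hβ hα hγ (r := fun x => pev w (x.2, x.1))
    (r1 := fun x => pev (MvPolynomial.pderiv 1 w) (x.2, x.1))
    ((c0 w).comp (by fun_prop)) ((c0 _).comp (by fun_prop)) (fun x y => pev_hasDerivAt1 w x y)
  have h3 := ibp_base hα hγ hβ (r := fun x => pev (v - w) (x.1, 1 - x.1 - x.2))
    (r1 := fun x => pev (MvPolynomial.pderiv 0 (v - w)) (x.1, 1 - x.1 - x.2) -
      pev (MvPolynomial.pderiv 1 (v - w)) (x.1, 1 - x.1 - x.2))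
    ((c0 _).comp (by fun_prop)) (((c0 _).comp (by fun_prop)).sub ((c0 _).comp (by fun_prop)))
    (fun x y => pev_hasDerivAt2 (v - w) x y)
  rw [← setInt_involutive (s := Prod.swap) Measure.measurePreserving_swap measurable_swap
    Prod.swap_swap (by
      intro x
      constructor
      · rintro ⟨a, b, c⟩; simp only [Prod.fst_swap, Prod.snd_swap] at a b c; exact ⟨b, a, by linarith⟩
      · rintro ⟨a, b, c⟩; exact ⟨b, a, by simp only [Prod.fst_swap, Prod.snd_swap]; linarith⟩)] at h2
  rw [← setInt_involutive (s := sigF) sigF_mp sigF_meas sigF_inv (by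
      intro x
      simp only [sigF, Ttri, Set.mem_ofPred_eq]
      constructor
      · rintro ⟨a, b, c⟩; exact ⟨a, by linarith, by linarith⟩
      · rintro ⟨a, b, c⟩; exact ⟨a, by linarith, by linarith⟩)] at h3
  have i1 := rhoT_mul_int hα hβ hγ (m := fun x => ((α + 1) * (1 - x.1 - x.2) * pev v x -
    (γ + 1) * x.1 * pev v x + x.1 * (1 - x.1 - x.2) * pev (MvPolynomial.pderiv 0 v) x))
    (by have := c0 v; have := c0 (MvPolynomial.pderiv 0 v); fun_prop)
  have i2 := rhoT_mul_int hα hβ hγ (m := fun x => ((β + 1) * (1 - x.1 - x.2) * pev w x -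
    (γ + 1) * x.2 * pev w x + x.2 * (1 - x.1 - x.2) * pev (MvPolynomial.pderiv 1 w) x))
    (by have := c0 w; have := c0 (MvPolynomial.pderiv 1 w); fun_prop)
  have i3 := rhoT_mul_int hα hβ hγ (m := fun x => ((α + 1) * x.2 * pev (v - w) x -
    (β + 1) * x.1 * pev (v - w) x + x.1 * x.2 * (pev (MvPolynomial.pderiv 0 (v - w)) x -
      pev (MvPolynomial.pderiv 1 (v - w)) x)))
    (by have := c0 (v - w); have := c0 (MvPolynomial.pderiv 0 (v - w))
        have := c0 (MvPolynomial.pderiv 1 (v - w)); fun_prop)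
  have h2' : ∫ x in Ttri, rhoT α β γ x * ((β + 1) * (1 - x.1 - x.2) * pev w x -
    (γ + 1) * x.2 * pev w x + x.2 * (1 - x.1 - x.2) * pev (MvPolynomial.pderiv 1 w) x) = 0 := by
    rw [← h2]
    apply integral_congr_ae
    refine Eventually.of_forall fun x => ?_
    have : 1 - x.2 - x.1 = 1 - x.1 - x.2 := by ring
    simp only [rhoT, Prod.fst_swap, Prod.snd_swap, Prod.mk.eta, this]
    ring
  have h3' : ∫ x in Ttri, rhoT α β γ x * ((α + 1) * x.2 * pev (v - w) x -
    (β + 1) * x.1 * pev (v - w) x + x.1 * x.2 * (pev (MvPolynomial.pderiv 0 (v - w)) x -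
      pev (MvPolynomial.pderiv 1 (v - w)) x)) = 0 := by
    rw [← h3]
    apply integral_congr_ae
    refine Eventually.of_forall fun x => ?_
    have : 1 - x.1 - (1 - x.1 - x.2) = x.2 := by ring
    simp only [rhoT, sigF, Prod.mk.eta, this]
    ring
  have hs := integral_add i1 i2
  have hs2 := integral_add (i1.add i2) i3
  simp only [Pi.add_apply] at hs2
  rw [hs, h1, h2', h3'] at hs2
  rw [add_zero, add_zero] at hs2
  rw [← hs2]
  apply integral_congr_ae
  refine Eventually.of_forall fun x => ?_
  simp only [pev_Epol, pev_sub, map_sub]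
  ring

theorem rhoT_hasFDerivAt (α β γ : ℝ) {x : ℝ × ℝ} (hx : x ∈ Ttri) :
    HasFDerivAt (rhoT α β γ)
      ((rhoT α β γ x * (α / x.1 - γ / (1 - x.1 - x.2))) • ContinuousLinearMap.fst ℝ ℝ ℝ +
      (rhoT α β γ x * (β / x.2 - γ / (1 - x.1 - x.2))) • ContinuousLinearMap.snd ℝ ℝ ℝ) x := by
  obtain ⟨h1, h2, h3⟩ := hx
  have p3 : 0 < 1 - x.1 - x.2 := by linarith
  have d1 := (hasFDerivAt_fst (𝕜 := ℝ) (p := x) : HasFDerivAt (Prod.fst : ℝ × ℝ → ℝ) _ x)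
  have d2 := (hasFDerivAt_snd (𝕜 := ℝ) (p := x) : HasFDerivAt (Prod.snd : ℝ × ℝ → ℝ) _ x)
  have d3 := (d1.const_sub 1).sub d2
  have e := ((d1.rpow_const (p := α) (Or.inl h1.ne')).mul (d2.rpow_const (p := β) (Or.inl h2.ne'))).mul
    (d3.rpow_const (p := γ) (Or.inl p3.ne'))
  refine HasFDerivAt.congr_fderiv (f := rhoT α β γ) e ?_
  have r1 := Real.rpow_sub_one h1.ne' α
  have r2 := Real.rpow_sub_one h2.ne' β
  have r3 := Real.rpow_sub_one p3.ne' γ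
  ext
  · simp [rhoT, r1, r2, r3]; field_simp; ring
  · simp [rhoT, r1, r2, r3]; field_simp; ring

theorem divRhoPhi_eq (α β γ : ℝ) (v w : Poly2) {x : ℝ × ℝ} (hx : x ∈ Ttri) :
    divRhoPhi (rhoT α β γ) q11 q12 q12 q22 v w x = rhoT α β γ x * pev (Epol α β γ v w) x := by
  have dr := rhoT_hasFDerivAt α β γ hx
  have e1 : (fun y => rhoT α β γ y * (pev q11 y * pev v y + pev q12 y * pev w y)) =
      fun y => rhoT α β γ y * pev (q11 * v + q12 * w) y := by
    ext y; simp [pev_add, pev_mul]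
  have e2 : (fun y => rhoT α β γ y * (pev q12 y * pev v y + pev q22 y * pev w y)) =
      fun y => rhoT α β γ y * pev (q12 * v + q22 * w) y := by
    ext y; simp [pev_add, pev_mul]
  have f1 := dr.mul (pev_hasFDerivAt (q11 * v + q12 * w) x)
  have f2 := dr.mul (pev_hasFDerivAt (q12 * v + q22 * w) x)
  unfold divRhoPhi
  rw [e1, e2, pev_Epol]
  have f1' := f1.fderiv
  have f2' := f2.fderiv
  change fderiv ℝ (fun y => rhoT α β γ y * pev (q11 * v + q12 * w) y) x = _ at f1'
  change fderiv ℝ (fun y => rhoT α β γ y * pev (q12 * v + q22 * w) y) x = _ at f2'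
  rw [f1', f2']
  obtain ⟨h1, h2, h3⟩ := hx
  have p3 : 0 < 1 - x.1 - x.2 := by linarith
  have D1 : pev (MvPolynomial.pderiv 0 q11) x = 1 - 2 * x.1 := by
    simp [q11, pev]; ring
  have D2 : pev (MvPolynomial.pderiv 0 q12) x = - x.2 := by
    simp [q12, pev, MvPolynomial.pderiv_X]
  have D3 : pev (MvPolynomial.pderiv 1 q12) x = - x.1 := by
    simp [q12, pev, MvPolynomial.pderiv_X]
  have D4 : pev (MvPolynomial.pderiv 1 q22) x = 1 - 2 * x.2 := by
    simp [q22, pev]; ring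
  simp [pev_add, pev_mul, D1, D2, D3, D4, pev_q11, pev_q12, pev_q22]
  field_simp
  ring

open MvPolynomial in
noncomputable def Lpol (α β γ : ℝ) : Poly2 →ₗ[ℝ] Poly2 where
  toFun p := - Epol α β γ (pderiv 0 p) (pderiv 1 p)
  map_add' p q := by simp only [Epol, map_add]; ring
  map_smul' c p := by
    simp only [Epol, RingHom.id_apply, smul_eq_C_mul, pderiv_C_mul]; ring

def lamk (α β γ : ℝ) (k : ℕ) : ℝ := k * (k - 1 + (α + β + γ + 3))

noncomputable abbrev PP (n : ℕ) : Submodule ℝ Poly2 := MvPolynomial.restrictTotalDegree (Fin 2) ℝ n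

open MvPolynomial in
theorem homog_mem_PP {h : Poly2} {d n : ℕ} (hh : h.IsHomogeneous d) (hd : d ≤ n) : h ∈ PP n := by
  rw [mem_restrictTotalDegree]
  exact hh.totalDegree_le.trans hd

open MvPolynomial in
theorem homog_Xd {h : Poly2} {d : ℕ} (i j : Fin 2) (hh : h.IsHomogeneous d) :
    (X i * pderiv j h : Poly2).IsHomogeneous d := by
  rcases d with _ | d
  · have hh := totalDegree_eq_zero_iff_eq_C.1 (Nat.le_zero.1 hh.totalDegree_le)
    rw [hh]; simp
    exact isHomogeneous_zero _ _ _
  · have := (isHomogeneous_X ℝ i).mul (hh.pderiv (i := j))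
    simpa [add_comm] using this

open MvPolynomial in
theorem Lpol_homog (α β γ : ℝ) {h : Poly2} {d : ℕ} (hh : h.IsHomogeneous d) :
    Lpol α β γ h - lamk α β γ d • h ∈ PP (d - 1) := by
  have key : Lpol α β γ h - lamk α β γ d • h =
      -(C (α + 1) * pderiv 0 h + C (β + 1) * pderiv 1 h + X 0 * pderiv 0 (pderiv 0 h) +
        X 1 * pderiv 1 (pderiv 1 h)) := by
    have E0 := hh.sum_X_mul_pderiv
    have E1 := (hh.pderiv (i := 0)).sum_X_mul_pderiv
    have E2 := (hh.pderiv (i := 1)).sum_X_mul_pderiv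
    simp only [Fin.sum_univ_two] at E0 E1 E2
    change - Epol α β γ (pderiv 0 h) (pderiv 1 h) - _ = _
    rcases d with _ | d
    · have hh := totalDegree_eq_zero_iff_eq_C.1 (Nat.le_zero.1 hh.totalDegree_le)
      rw [hh]; simp [Epol, lamk]
    · simp only [Nat.add_sub_cancel] at E1 E2
      have hl : lamk α β γ (d + 1) = (d + 1 : ℝ) * (d + (α + β + γ + 3)) := by
        simp [lamk]
      rw [hl, smul_eq_C_mul]
      simp only [nsmul_eq_mul] at E0 E1 E2
      have c1 : (C ((d + 1 : ℝ) * (d + (α + β + γ + 3))) : Poly2) =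
        ((d + 1 : ℕ) : Poly2) * ((d : Poly2) + C (α + β + γ + 3)) := by
        rw [map_mul, map_add, map_add, map_one, map_natCast]; push_cast; ring
      rw [c1]
      unfold Epol q11 q12 q22
      linear_combination (C (α + β + γ + 3) + (d : Poly2)) * E0 + X 0 * E1 + X 1 * E2
  rw [key]
  have p0 := homog_mem_PP (hh.pderiv (i := 0)) le_rfl
  have p1 := homog_mem_PP (hh.pderiv (i := 1)) le_rfl
  have p2 := homog_mem_PP (homog_Xd 0 0 (hh.pderiv (i := 0))) le_rfl
  have p3 := homog_mem_PP (homog_Xd 1 1 (hh.pderiv (i := 1))) le_rfl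
  rw [← smul_eq_C_mul, ← smul_eq_C_mul]
  exact Submodule.neg_mem _ (Submodule.add_mem _ (Submodule.add_mem _ (Submodule.add_mem _
    (Submodule.smul_mem _ _ p0) (Submodule.smul_mem _ _ p1)) p2) p3)

theorem PP_mono {m n : ℕ} (h : m ≤ n) : PP m ≤ PP n := by
  intro p hp
  rw [MvPolynomial.mem_restrictTotalDegree] at *
  exact hp.trans h

open MvPolynomial in
theorem Lpol_mem (α β γ : ℝ) {p : Poly2} {n : ℕ} (hp : p ∈ PP n) : Lpol α β γ p ∈ PP n := by
  rw [mem_restrictTotalDegree] at hp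
  rw [← sum_homogeneousComponent p, map_sum]
  refine Submodule.sum_mem _ fun i hi => ?_
  have hi' : i ≤ n := by rw [Finset.mem_range] at hi; omega
  have hh := homogeneousComponent_isHomogeneous i p
  have h1 := PP_mono (show i - 1 ≤ n by omega) (Lpol_homog α β γ hh)
  have h2 := Submodule.smul_mem _ (lamk α β γ i) (homog_mem_PP hh hi')
  have := Submodule.add_mem _ h1 h2
  simpa using this

open MvPolynomial in
theorem Lpol_sub_mem (α β γ : ℝ) {p : Poly2} {n : ℕ} (hp : p ∈ PP (n + 1)) :
    Lpol α β γ p - lamk α β γ (n + 1) • p ∈ PP n := by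
  rw [mem_restrictTotalDegree] at hp
  rw [← sum_homogeneousComponent p, map_sum, Finset.smul_sum, ← Finset.sum_sub_distrib]
  refine Submodule.sum_mem _ fun i hi => ?_
  have hi' : i ≤ n + 1 := by rw [Finset.mem_range] at hi; omega
  have hh := homogeneousComponent_isHomogeneous i p
  have h1 := PP_mono (show i - 1 ≤ n by omega) (Lpol_homog α β γ hh)
  rcases eq_or_lt_of_le hi' with he | hlt
  · subst he; exact h1
  · have h2 := Submodule.smul_mem _ (lamk α β γ i - lamk α β γ (n + 1)) (homog_mem_PP hh (show i ≤ n by omega))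
    have := Submodule.add_mem _ h1 h2
    rw [sub_smul] at this
    convert this using 1
    abel

theorem lamk_mono {α β γ : ℝ} (hα : -1 < α) (hβ : -1 < β) (hγ : -1 < γ) {m n : ℕ} (hmn : m ≤ n) :
    lamk α β γ (m + 1) ≤ lamk α β γ (n + 1) := by
  unfold lamk
  have : (m : ℝ) ≤ n := by exact_mod_cast hmn
  have hm : (0:ℝ) ≤ m := by positivity
  push_cast
  apply mul_le_mul <;> linarith

theorem lamk_ge {α β γ : ℝ} (hα : -1 < α) (hβ : -1 < β) (hγ : -1 < γ) (n : ℕ) :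
    (n : ℝ) * n ≤ lamk α β γ (n + 1) := by
  unfold lamk
  have hm : (0:ℝ) ≤ n := by positivity
  push_cast
  apply mul_le_mul <;> linarith

class Par (α β γ : ℝ) : Prop where
  a : -1 < α
  b : -1 < β
  c : -1 < γ

noncomputable def muT (α β γ : ℝ) : Measure (ℝ × ℝ) :=
  (volume.restrict Ttri).withDensity (fun x => ENNReal.ofReal (rhoT α β γ x))

theorem integral_muT (α β γ : ℝ) (f : ℝ × ℝ → ℝ) :
    ∫ x, f x ∂(muT α β γ) = ∫ x in Ttri, rhoT α β γ x * f x := by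
  rw [muT, integral_withDensity_eq_integral_toReal_smul (rhoT_meas α β γ).ennreal_ofReal
    (Eventually.of_forall fun _ => ENNReal.ofReal_lt_top)]
  refine setIntegral_congr_fun Ttri_meas fun x hx => ?_
  simp only [smul_eq_mul]
  rw [ENNReal.toReal_ofReal (rhoT_pos hx).le]

theorem integrable_muT (α β γ : ℝ) (f : ℝ × ℝ → ℝ) :
    Integrable f (muT α β γ) ↔ IntegrableOn (fun x => rhoT α β γ x * f x) Ttri := by
  rw [muT, integrable_withDensity_iff_integrable_smul' (rhoT_meas α β γ).ennreal_ofReal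
    (Eventually.of_forall fun _ => ENNReal.ofReal_lt_top)]
  refine integrableOn_congr_fun (fun x hx => ?_) Ttri_meas
  simp only [smul_eq_mul]
  rw [ENNReal.toReal_ofReal (rhoT_pos hx).le]

theorem ae_muT (α β γ : ℝ) {P : ℝ × ℝ → Prop} (h : ∀ x ∈ Ttri, P x) : ∀ᵐ x ∂(muT α β γ), P x := by
  refine (withDensity_absolutelyContinuous (volume.restrict Ttri) _).ae_le ?_
  exact (ae_restrict_iff' Ttri_meas).2 (Eventually.of_forall h)

theorem ae_vol (α β γ : ℝ) {P : ℝ × ℝ → Prop} (h : ∀ᵐ x ∂(muT α β γ), P x) :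
    ∀ᵐ x ∂(volume.restrict Ttri), P x := by
  rw [muT, ae_withDensity_iff (rhoT_meas α β γ).ennreal_ofReal] at h
  filter_upwards [h, ae_restrict_mem Ttri_meas] with x hx hT
  apply hx
  simp [rhoT_pos hT]

instance muT_fin (α β γ : ℝ) [h : Par α β γ] : IsFiniteMeasure (muT α β γ) :=
  isFiniteMeasure_withDensity_ofReal (rhoT_int h.a h.b h.c).2

theorem cont_int (α β γ : ℝ) [h : Par α β γ] {m : ℝ × ℝ → ℝ} (hm : Continuous m) :
    Integrable m (muT α β γ) :=
  (integrable_muT α β γ m).2 (rhoT_mul_int h.a h.b h.c hm)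

theorem cont_memLp (α β γ : ℝ) [h : Par α β γ] {m : ℝ × ℝ → ℝ} (hm : Continuous m) :
    MemLp m 2 (muT α β γ) := by
  rw [memLp_two_iff_integrable_sq hm.aestronglyMeasurable]
  exact cont_int α β γ (by fun_prop)

noncomputable abbrev bP (x u v : ℝ × ℝ) : ℝ := bilPhi q11 q12 q12 q22 x u v

theorem bP_eq (x u v : ℝ × ℝ) : bP x u v = u.1 * (x.1 * (1 - x.1) * v.1 - x.1 * x.2 * v.2) +
    u.2 * (- (x.1 * x.2 * v.1) + x.2 * (1 - x.2) * v.2) := by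
  simp only [bP, bilPhi, pev_q11, pev_q12, pev_q22]; ring

def VV (x : ℝ × ℝ) : ℝ := 2 + x.1 ^ 2 + x.2 ^ 2

theorem VV_pos (x : ℝ × ℝ) : 0 < VV x := by unfold VV; positivity

theorem VV_meas : Measurable VV := by unfold VV; fun_prop

theorem VV_cont : Continuous VV := by unfold VV; fun_prop

noncomputable def sa (x : ℝ × ℝ) : ℝ := √(x.1 * (1 - x.1))
noncomputable def sb (x : ℝ × ℝ) : ℝ := √(x.2 * (1 - x.1 - x.2) / (1 - x.1))
noncomputable def sc (x : ℝ × ℝ) : ℝ := x.2 / (1 - x.1)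

theorem sa_meas : Measurable sa := by unfold sa; fun_prop
theorem sb_meas : Measurable sb := by unfold sb; fun_prop
theorem sc_meas : Measurable sc := by unfold sc; fun_prop

abbrev E3 := EuclideanSpace ℝ (Fin 3)

noncomputable def Fv (x : ℝ × ℝ) (u : ℝ) (g : ℝ × ℝ) : E3 :=
  WithLp.toLp 2 ![√(VV x) * u, sa x * (g.1 - sc x * g.2), sb x * g.2]

noncomputable def invU (x : ℝ × ℝ) (e : E3) : ℝ := e 0 / √(VV x)

noncomputable def invG (x : ℝ × ℝ) (e : E3) : ℝ × ℝ :=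
  (e 1 / sa x + sc x * (e 2 / sb x), e 2 / sb x)

theorem sa_pos {x : ℝ × ℝ} (hx : x ∈ Ttri) : 0 < sa x := by
  obtain ⟨h1, h2, h3⟩ := hx
  exact Real.sqrt_pos.2 (mul_pos h1 (by linarith))

theorem sb_pos {x : ℝ × ℝ} (hx : x ∈ Ttri) : 0 < sb x := by
  obtain ⟨h1, h2, h3⟩ := hx
  exact Real.sqrt_pos.2 (div_pos (mul_pos h2 (by linarith)) (by linarith))

theorem Fv_inv {x : ℝ × ℝ} (hx : x ∈ Ttri) (e : E3) : Fv x (invU x e) (invG x e) = e := by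
  have h1 := sa_pos hx
  have h2 := sb_pos hx
  have h3 := Real.sqrt_pos.2 (VV_pos x)
  ext i
  fin_cases i
  · simp [Fv, invU]; field_simp
  · simp [Fv, invG]; field_simp
  · simp [Fv, invG]; field_simp

theorem inner_E3 (e f : E3) : inner ℝ e f = e 0 * f 0 + e 1 * f 1 + e 2 * f 2 := by
  rw [PiLp.inner_apply, Fin.sum_univ_three]
  simp; ring

theorem Fv_inner {x : ℝ × ℝ} (hx : x ∈ Ttri) (u v : ℝ) (g h : ℝ × ℝ) :
    inner ℝ (Fv x u g) (Fv x v h) = VV x * (u * v) + bP x g h := by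
  obtain ⟨h1, h2, h3⟩ := hx
  rw [inner_E3, bP_eq]
  have p1 : 0 < 1 - x.1 := by linarith
  have e1 : sa x * sa x = x.1 * (1 - x.1) := Real.mul_self_sqrt (by positivity)
  have e2 : sb x * sb x = x.2 * (1 - x.1 - x.2) / (1 - x.1) :=
    Real.mul_self_sqrt (div_nonneg (mul_nonneg h2.le (by linarith)) p1.le)
  have e3 : √(VV x) * √(VV x) = VV x := Real.mul_self_sqrt (VV_pos x).le
  have : (Fv x u g) 0 * (Fv x v h) 0 + (Fv x u g) 1 * (Fv x v h) 1 + (Fv x u g) 2 * (Fv x v h) 2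
     = (√(VV x) * √(VV x)) * (u * v) + (sa x * sa x) * ((g.1 - sc x * g.2) * (h.1 - sc x * h.2)) +
       (sb x * sb x) * (g.2 * h.2) := by
    simp [Fv]; ring
  rw [this, e1, e2, e3, sc]
  field_simp
  ring

theorem Fv_sub (x : ℝ × ℝ) (u v : ℝ) (g h : ℝ × ℝ) :
    Fv x (u - v) (g - h) = Fv x u g - Fv x v h := by
  ext i
  fin_cases i <;> simp [Fv] <;> ring

theorem Fv_add (x : ℝ × ℝ) (u v : ℝ) (g h : ℝ × ℝ) :
    Fv x (u + v) (g + h) = Fv x u g + Fv x v h := by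
  ext i
  fin_cases i <;> simp [Fv] <;> ring

theorem Fv_smul (x : ℝ × ℝ) (c u : ℝ) (g : ℝ × ℝ) :
    Fv x (c * u) (c • g) = c • Fv x u g := by
  ext i
  fin_cases i <;> simp [Fv] <;> ring

theorem Fv_meas {u : ℝ × ℝ → ℝ} {g : ℝ × ℝ → ℝ × ℝ} (hu : Measurable u) (hg : Measurable g) :
    Measurable (fun x => Fv x (u x) (g x)) := by
  unfold Fv
  refine (WithLp.measurable_toLp 2 _).comp ?_
  rw [measurable_pi_iff]
  have := sa_meas; have := sb_meas; have := sc_meas; have := VV_meas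
  intro i
  fin_cases i
  · simp; fun_prop
  · simp; fun_prop
  · simp; fun_prop

theorem bP_nonneg {x : ℝ × ℝ} (hx : x ∈ Ttri) (g : ℝ × ℝ) : 0 ≤ bP x g g := by
  have := Fv_inner hx 0 0 g g
  have h2 := real_inner_self_nonneg (x := Fv x 0 g)
  rw [this] at h2; simpa using h2

theorem bP_meas {g h : ℝ × ℝ → ℝ × ℝ} (hg : Measurable g) (hh : Measurable h) :
    Measurable (fun x => bP x (g x) (h x)) := by
  simp only [bP_eq]; fun_prop

theorem VV_le {x : ℝ × ℝ} (hx : x ∈ Ttri) : VV x ≤ 4 := by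
  obtain ⟨h1, h2, h3⟩ := hx
  unfold VV; nlinarith

theorem VV_ge (x : ℝ × ℝ) : 1 ≤ VV x := by
  unfold VV; nlinarith [sq_nonneg x.1, sq_nonneg x.2]

theorem Vu_int (α β γ : ℝ) {u : ℝ × ℝ → ℝ} (h1 : Integrable u (muT α β γ)) :
    Integrable (fun x => VV x * u x) (muT α β γ) := by
  refine h1.bdd_mul (c := 4) VV_meas.aestronglyMeasurable (ae_muT α β γ fun x hx => ?_)
  rw [Real.norm_of_nonneg (VV_pos x).le]; exact VV_le hx

theorem memF (α β γ : ℝ) {u : ℝ × ℝ → ℝ} {g : ℝ × ℝ → ℝ × ℝ} (hu : Measurable u)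
    (hg : Measurable g) (h1 : Integrable (fun x => u x ^ 2) (muT α β γ))
    (h2 : Integrable (fun x => bP x (g x) (g x)) (muT α β γ)) :
    MemLp (fun x => Fv x (u x) (g x)) 2 (muT α β γ) := by
  rw [memLp_two_iff_integrable_sq_norm (Fv_meas hu hg).aestronglyMeasurable]
  have h3 := (Vu_int α β γ h1).add h2
  refine h3.congr (ae_muT α β γ fun x hx => ?_)
  simp only [Pi.add_apply]
  rw [← real_inner_self_eq_norm_sq, Fv_inner hx]; ring

noncomputable abbrev HH (α β γ : ℝ) := Lp ℝ 2 (muT α β γ)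
noncomputable abbrev HF (α β γ : ℝ) := Lp E3 2 (muT α β γ)

noncomputable def polyH (α β γ : ℝ) [Par α β γ] : Poly2 →ₗ[ℝ] HH α β γ where
  toFun p := (cont_memLp α β γ (pev_continuous p)).toLp (pev p)
  map_add' p q := by
    rw [← MemLp.toLp_add]
    exact MemLp.toLp_congr _ _ (Eventually.of_forall fun x => pev_add p q x)
  map_smul' c p := by
    rw [RingHom.id_apply, ← MemLp.toLp_const_smul]
    exact MemLp.toLp_congr _ _ (Eventually.of_forall fun x => pev_smul c p x)

theorem polyH_coe (α β γ : ℝ) [Par α β γ] (p : Poly2) :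
    polyH α β γ p =ᵐ[muT α β γ] pev p :=
  MemLp.coeFn_toLp (cont_memLp α β γ (pev_continuous p))

theorem pg_cont (p : Poly2) : Continuous (polyGrad p) := by
  unfold polyGrad
  exact (pev_continuous _).prodMk (pev_continuous _)

theorem bP_cont {g h : ℝ × ℝ → ℝ × ℝ} (hg : Continuous g) (hh : Continuous h) :
    Continuous (fun x => bP x (g x) (h x)) := by
  simp only [bP_eq]; fun_prop

theorem contF_memLp (α β γ : ℝ) [Par α β γ] {u : ℝ × ℝ → ℝ} {g : ℝ × ℝ → ℝ × ℝ}
    (hu : Continuous u) (hg : Continuous g) :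
    MemLp (fun x => Fv x (u x) (g x)) 2 (muT α β γ) :=
  memF α β γ hu.measurable hg.measurable (cont_int α β γ (by fun_prop))
    (cont_int α β γ (bP_cont hg hg))

theorem pg_add (p q : Poly2) (x : ℝ × ℝ) : polyGrad (p + q) x = polyGrad p x + polyGrad q x := by
  simp [polyGrad, pev_add]

theorem pg_smul (c : ℝ) (p : Poly2) (x : ℝ × ℝ) : polyGrad (c • p) x = c • polyGrad p x := by
  simp only [polyGrad, Derivation.map_smul, pev_smul, Prod.smul_mk, smul_eq_mul]

noncomputable def polyF (α β γ : ℝ) [Par α β γ] : Poly2 →ₗ[ℝ] HF α β γ where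
  toFun p := (contF_memLp α β γ (pev_continuous p) (pg_cont p)).toLp _
  map_add' p q := by
    rw [← MemLp.toLp_add]
    refine MemLp.toLp_congr _ _ (Eventually.of_forall fun x => ?_)
    simp only [Pi.add_apply]
    rw [pev_add, pg_add, Fv_add]
  map_smul' c p := by
    rw [RingHom.id_apply, ← MemLp.toLp_const_smul]
    refine MemLp.toLp_congr _ _ (Eventually.of_forall fun x => ?_)
    simp only [Pi.smul_apply]
    rw [pev_smul, pg_smul, Fv_smul]

theorem polyF_coe (α β γ : ℝ) [Par α β γ] (p : Poly2) :
    polyF α β γ p =ᵐ[muT α β γ] fun x => Fv x (pev p x) (polyGrad p x) :=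
  MemLp.coeFn_toLp (contF_memLp α β γ (pev_continuous p) (pg_cont p))

theorem invU_norm_le (x : ℝ × ℝ) (e : E3) : ‖invU x e‖ ≤ ‖e‖ := by
  unfold invU
  rw [norm_div]
  have h1 : 1 ≤ ‖√(VV x)‖ := by
    rw [Real.norm_of_nonneg (Real.sqrt_nonneg _), Real.one_le_sqrt]; exact VV_ge x
  have h2 : ‖e 0‖ ≤ ‖e‖ := PiLp.norm_apply_le e 0
  exact (div_le_self (norm_nonneg _) h1).trans h2

theorem invU_meas {e : ℝ × ℝ → E3} (he : Measurable e) : Measurable (fun x => invU x (e x)) := by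
  unfold invU
  have := VV_meas
  have : Measurable (fun x => e x 0) := by fun_prop
  fun_prop

theorem invG_meas {e : ℝ × ℝ → E3} (he : Measurable e) : Measurable (fun x => invG x (e x)) := by
  unfold invG
  have := sa_meas; have := sb_meas; have := sc_meas
  have : Measurable (fun x => e x 1) := by fun_prop
  have : Measurable (fun x => e x 2) := by fun_prop
  fun_prop

theorem invU_memLp {α β γ : ℝ} (F : HF α β γ) : MemLp (fun x => invU x (F x)) 2 (muT α β γ) :=
  (Lp.memLp F).mono (invU_meas (Lp.stronglyMeasurable F).measurable).aestronglyMeasurable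
    (Eventually.of_forall fun x => invU_norm_le x _)

noncomputable def Jlin (α β γ : ℝ) : HF α β γ →ₗ[ℝ] HH α β γ where
  toFun F := (invU_memLp F).toLp _
  map_add' F G := by
    rw [← MemLp.toLp_add]
    refine MemLp.toLp_congr _ _ ?_
    filter_upwards [Lp.coeFn_add F G] with x hx
    rw [Pi.add_apply, hx]
    simp [invU, add_div]
  map_smul' c F := by
    rw [RingHom.id_apply, ← MemLp.toLp_const_smul]
    refine MemLp.toLp_congr _ _ ?_
    filter_upwards [Lp.coeFn_smul c F] with x hx
    rw [Pi.smul_apply, hx]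
    simp [invU, mul_div_assoc]

theorem Jlin_coe {α β γ : ℝ} (F : HF α β γ) :
    Jlin α β γ F =ᵐ[muT α β γ] fun x => invU x (F x) := MemLp.coeFn_toLp (invU_memLp F)

noncomputable def JJ (α β γ : ℝ) : HF α β γ →L[ℝ] HH α β γ :=
  (Jlin α β γ).mkContinuous 1 (by
    intro F
    rw [one_mul]
    refine Lp.norm_le_norm_of_ae_le ?_
    filter_upwards [Jlin_coe F] with x hx
    rw [hx]; exact invU_norm_le x _)

theorem JJ_coe {α β γ : ℝ} (F : HF α β γ) :
    JJ α β γ F =ᵐ[muT α β γ] fun x => invU x (F x) := Jlin_coe F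

theorem invU_Fv (x : ℝ × ℝ) (u : ℝ) (g : ℝ × ℝ) : invU x (Fv x u g) = u := by
  have h3 := Real.sqrt_pos.2 (VV_pos x)
  simp [invU, Fv]; field_simp

theorem JJ_polyF {α β γ : ℝ} [Par α β γ] (p : Poly2) : JJ α β γ (polyF α β γ p) = polyH α β γ p := by
  refine Lp.ext ?_
  filter_upwards [JJ_coe (polyF α β γ p), polyF_coe α β γ p, polyH_coe α β γ p] with x h1 h2 h3
  rw [h1, h2, h3, invU_Fv]

theorem innerH {α β γ : ℝ} (F G : HH α β γ) :
    inner ℝ F G = ∫ x in Ttri, rhoT α β γ x * (F x * G x) := by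
  rw [L2.inner_def, integral_muT]
  refine setIntegral_congr_fun Ttri_meas fun x hx => ?_
  simp [mul_comm]

theorem innerF {α β γ : ℝ} (F G : HF α β γ) {u v : ℝ × ℝ → ℝ} {g h : ℝ × ℝ → ℝ × ℝ}
    (hF : F =ᵐ[muT α β γ] fun x => Fv x (u x) (g x))
    (hG : G =ᵐ[muT α β γ] fun x => Fv x (v x) (h x)) :
    inner ℝ F G = ∫ x, (VV x * (u x * v x) + bP x (g x) (h x)) ∂(muT α β γ) := by
  rw [L2.inner_def]
  refine integral_congr_ae ?_
  filter_upwards [hF, hG, ae_muT α β γ fun x hx => Fv_inner hx (u x) (v x) (g x) (h x)] with x h1 h2 h3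
  rw [h1, h2, h3]

theorem Epol_mul (α β γ : ℝ) (q v w : Poly2) (x : ℝ × ℝ) :
    pev (Epol α β γ (q * v) (q * w)) x = pev q x * pev (Epol α β γ v w) x +
      bP x (polyGrad q x) (pev v x, pev w x) := by
  simp only [pev_Epol, bP_eq, polyGrad, MvPolynomial.pderiv_mul, pev_add, pev_mul]
  ring

theorem weakE {α β γ : ℝ} [hp : Par α β γ] (q v w : Poly2) :
    ∫ x, pev q x * pev (Epol α β γ v w) x ∂(muT α β γ) +
      ∫ x, bP x (polyGrad q x) (pev v x, pev w x) ∂(muT α β γ) = 0 := by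
  have := ibp_E hp.a hp.b hp.c (q * v) (q * w)
  rw [← integral_muT] at this
  simp only [Epol_mul] at this
  rw [integral_add] at this
  · exact this
  · exact cont_int α β γ ((pev_continuous _).mul (pev_continuous _))
  · exact cont_int α β γ (bP_cont (pg_cont q) ((pev_continuous _).prodMk (pev_continuous _)))

theorem innerHp {α β γ : ℝ} [Par α β γ] (p q : Poly2) :
    inner ℝ (polyH α β γ p) (polyH α β γ q) = ∫ x, pev p x * pev q x ∂(muT α β γ) := by
  rw [L2.inner_def]
  refine integral_congr_ae ?_
  filter_upwards [polyH_coe α β γ p, polyH_coe α β γ q] with x h1 h2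
  rw [h1, h2]; simp [mul_comm]

theorem bP_symm (x u v : ℝ × ℝ) : bP x u v = bP x v u := by
  simp only [bP_eq]; ring

theorem BB_eq {α β γ : ℝ} [Par α β γ] (p q : Poly2) :
    inner ℝ (polyH α β γ (Lpol α β γ p)) (polyH α β γ q) =
      ∫ x, bP x (polyGrad p x) (polyGrad q x) ∂(muT α β γ) := by
  rw [innerHp]
  have h := weakE (α := α) (β := β) (γ := γ) q (MvPolynomial.pderiv 0 p) (MvPolynomial.pderiv 1 p)
  have e1 : ∀ x, pev (Lpol α β γ p) x * pev q x =
      - (pev q x * pev (Epol α β γ (MvPolynomial.pderiv 0 p) (MvPolynomial.pderiv 1 p)) x) := by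
    intro x
    change pev (-Epol α β γ _ _) x * _ = _
    rw [pev_neg]; ring
  simp only [e1]
  rw [integral_neg]
  have e2 : ∀ x, bP x (polyGrad p x) (polyGrad q x) = bP x (polyGrad q x)
    (pev (MvPolynomial.pderiv 0 p) x, pev (MvPolynomial.pderiv 1 p) x) := fun x => bP_symm _ _ _
  simp only [e2]
  linarith

theorem BB_symm {α β γ : ℝ} [Par α β γ] (p q : Poly2) :
    inner ℝ (polyH α β γ (Lpol α β γ p)) (polyH α β γ q) =
    inner ℝ (polyH α β γ (Lpol α β γ q)) (polyH α β γ p) := by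
  rw [BB_eq, BB_eq]
  simp only [bP_symm]

theorem BB_nonneg {α β γ : ℝ} [Par α β γ] (p : Poly2) :
    0 ≤ inner ℝ (polyH α β γ (Lpol α β γ p)) (polyH α β γ p) := by
  rw [BB_eq]
  exact integral_nonneg_of_ae (ae_muT α β γ fun x hx => bP_nonneg hx _)

theorem BB_le {α β γ : ℝ} [Par α β γ] (p : Poly2) :
    inner ℝ (polyH α β γ (Lpol α β γ p)) (polyH α β γ p) ≤ ‖polyF α β γ p‖ ^ 2 := by
  rw [BB_eq, ← real_inner_self_eq_norm_sq, innerF _ _ (polyF_coe α β γ p) (polyF_coe α β γ p)]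
  have := pev_continuous p
  have := VV_cont
  refine integral_mono (cont_int α β γ (bP_cont (pg_cont p) (pg_cont p)))
    (cont_int α β γ ((by fun_prop : Continuous fun x => VV x * (pev p x * pev p x)).add
      (bP_cont (pg_cont p) (pg_cont p)))) fun x => ?_
  have := VV_pos x
  have : 0 ≤ VV x * (pev p x * pev p x) := mul_nonneg this.le (mul_self_nonneg _)
  simp only; linarith

noncomputable abbrev Sn (α β γ : ℝ) [Par α β γ] (n : ℕ) : Submodule ℝ (HH α β γ) :=
  (PP n).map (polyH α β γ)

theorem approx_ind {α β γ : ℝ} [hp : Par α β γ] (n k : ℕ) : ∀ p ∈ PP (n + k),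
    ∃ s ∈ Sn α β γ n, lamk α β γ (n + 1) * ‖polyH α β γ p - s‖ ^ 2 ≤
      inner ℝ (polyH α β γ (Lpol α β γ p)) (polyH α β γ p) := by
  induction k with
  | zero =>
    intro p hpp
    refine ⟨polyH α β γ p, Submodule.mem_map_of_mem hpp, ?_⟩
    simpa using BB_nonneg p
  | succ k ih =>
    intro p hpp
    set m := n + k with hm
    have hpp : p ∈ PP (m + 1) := hpp
    obtain ⟨p', hp', hpe⟩ := (Sn α β γ m).starProjection_apply_mem (polyH α β γ p)
    obtain ⟨s, hs, hle⟩ := ih p' hp'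
    refine ⟨s, hs, ?_⟩
    have hr : p - p' ∈ PP (m + 1) := Submodule.sub_mem _ hpp (PP_mono (Nat.le_succ m) hp')
    set r := p - p' with hrdef
    have horth : ∀ z ∈ Sn α β γ m, inner ℝ (polyH α β γ r) z = 0 := by
      intro z hz
      have := (Sn α β γ m).starProjection_inner_eq_zero (polyH α β γ p) z hz
      rw [← hpe] at this
      rw [hrdef, map_sub]; exact this
    have horth' : ∀ z ∈ Sn α β γ m, inner ℝ z (polyH α β γ r) = 0 := by
      intro z hz; rw [real_inner_comm]; exact horth z hz
    have hpsum : p = p' + r := by rw [hrdef]; abel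
    have b1 : inner ℝ (polyH α β γ (Lpol α β γ p')) (polyH α β γ r) = 0 :=
      horth' _ (Submodule.mem_map_of_mem (Lpol_mem α β γ hp'))
    have b2 : inner ℝ (polyH α β γ (Lpol α β γ r)) (polyH α β γ p') = 0 := by
      rw [BB_symm]; exact b1
    have b3 : inner ℝ (polyH α β γ (Lpol α β γ r)) (polyH α β γ r) =
        lamk α β γ (m + 1) * ‖polyH α β γ r‖ ^ 2 := by
      have h1 := horth' _ (Submodule.mem_map_of_mem (Lpol_sub_mem α β γ hr))
      rw [map_sub, map_smul, inner_sub_left, real_inner_smul_left, real_inner_self_eq_norm_sq] at h1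
      linarith
    have hsm : s ∈ Sn α β γ m := Submodule.map_mono (PP_mono (by omega)) hs
    have hps : polyH α β γ p' - s ∈ Sn α β γ m :=
      Submodule.sub_mem _ (Submodule.mem_map_of_mem hp') hsm
    have hn : ‖polyH α β γ p - s‖ ^ 2 = ‖polyH α β γ p' - s‖ ^ 2 + ‖polyH α β γ r‖ ^ 2 := by
      have : polyH α β γ p - s = (polyH α β γ p' - s) + polyH α β γ r := by
        rw [hpsum, map_add]; abel
      rw [this, norm_add_sq_real, horth' _ hps]; ring
    rw [hn]
    have hB : inner ℝ (polyH α β γ (Lpol α β γ p)) (polyH α β γ p) =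
        inner ℝ (polyH α β γ (Lpol α β γ p')) (polyH α β γ p') +
        lamk α β γ (m + 1) * ‖polyH α β γ r‖ ^ 2 := by
      conv_lhs => rw [hpsum]
      simp only [map_add, inner_add_left, inner_add_right]
      rw [b1, b2, b3]; ring
    rw [hB]
    have := lamk_mono hp.a hp.b hp.c (show n ≤ m by omega)
    have := mul_le_mul_of_nonneg_right this (sq_nonneg ‖polyH α β γ r‖)
    linarith

theorem approx_poly {α β γ : ℝ} [hp : Par α β γ] (n : ℕ) (p : Poly2) :
    n * ‖polyH α β γ p - (Sn α β γ n).starProjection (polyH α β γ p)‖ ≤ ‖polyF α β γ p‖ := by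
  have hpp : p ∈ PP (n + p.totalDegree) := by
    rw [MvPolynomial.mem_restrictTotalDegree]; omega
  obtain ⟨s, hs, h⟩ := approx_ind (α := α) (β := β) (γ := γ) n _ p hpp
  have h2 := BB_le (α := α) (β := β) (γ := γ) p
  have h3 : ‖polyH α β γ p - (Sn α β γ n).starProjection (polyH α β γ p)‖ ≤ ‖polyH α β γ p - s‖ := by
    rw [Submodule.starProjection_minimal]
    exact ciInf_le ⟨0, by rintro _ ⟨z, rfl⟩; exact norm_nonneg _⟩ (⟨s, hs⟩ : Sn α β γ n)
  have h4 := mul_le_mul_of_nonneg_right (lamk_ge hp.a hp.b hp.c n) (sq_nonneg ‖polyH α β γ p - s‖)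
  have h5 : (n * ‖polyH α β γ p - s‖) ^ 2 ≤ ‖polyF α β γ p‖ ^ 2 := by
    calc _ = (n:ℝ) * n * ‖polyH α β γ p - s‖ ^ 2 := by ring
      _ ≤ _ := h4.trans (h.trans h2)
  have h6 := abs_le_of_sq_le_sq h5 (norm_nonneg _)
  refine le_trans ?_ ((le_abs_self _).trans h6)
  gcongr

noncomputable abbrev WW (α β γ : ℝ) [Par α β γ] : Submodule ℝ (HF α β γ) :=
  (LinearMap.range (polyF α β γ)).topologicalClosure

theorem WW_closed_ind {α β γ : ℝ} [Par α β γ] {P : HF α β γ → Prop}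
    (hc : IsClosed {F | P F}) (h : ∀ p, P (polyF α β γ p)) {F : HF α β γ} (hF : F ∈ WW α β γ) : P F := by
  have : closure ((LinearMap.range (polyF α β γ) : Submodule ℝ (HF α β γ)) : Set (HF α β γ)) ⊆ {F | P F} :=
    closure_minimal (by rintro _ ⟨p, rfl⟩; exact h p) hc
  exact this hF

noncomputable def JW (α β γ : ℝ) [Par α β γ] : WW α β γ →L[ℝ] HH α β γ :=
  (JJ α β γ).comp (WW α β γ).subtypeL

theorem JW_compact (α β γ : ℝ) [Par α β γ] : IsCompactOperator (JW α β γ) := by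
  have ht : Tendsto (fun n : ℕ => (Sn α β γ n).starProjection.comp (JW α β γ)) atTop
      (nhds (JW α β γ)) := by
    refine (tendsto_iff_norm_sub_tendsto_zero (E := WW α β γ →L[ℝ] HH α β γ)).2 ?_
    refine squeeze_zero' (Eventually.of_forall fun _ => ContinuousLinearMap.opNorm_nonneg _) ?_
      (tendsto_one_div_atTop_nhds_zero_nat (𝕜 := ℝ))
    filter_upwards [eventually_gt_atTop 0] with n hn
    have hn' : (0:ℝ) < n := by exact_mod_cast hn
    refine ContinuousLinearMap.opNorm_le_bound _ (by positivity) fun w => ?_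
    have key : n * ‖JJ α β γ w - (Sn α β γ n).starProjection (JJ α β γ w)‖ ≤ ‖(w : HF α β γ)‖ := by
      refine WW_closed_ind (P := fun F =>
        n * ‖JJ α β γ F - (Sn α β γ n).starProjection (JJ α β γ F)‖ ≤ ‖F‖) ?_ ?_ w.2
      · exact isClosed_le (by fun_prop) (by fun_prop)
      · intro p; simp only [JJ_polyF]; exact approx_poly n p
    have e : ‖((Sn α β γ n).starProjection.comp (JW α β γ) - JW α β γ) w‖ =
        ‖JJ α β γ w - (Sn α β γ n).starProjection (JJ α β γ w)‖ := by
      rw [norm_sub_rev]; rfl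
    rw [e, one_div, inv_mul_eq_div, le_div_iff₀ hn', mul_comm]
    exact key
  refine isCompactOperator_of_tendsto ht (Eventually.of_forall fun n => ?_)
  have h1 : IsCompactOperator ((Sn α β γ n).subtypeL) :=
    have : LocallyCompactSpace (Sn α β γ n) := .of_finiteDimensional_of_complete ℝ _
    isCompactOperator_of_locallyCompactSpace_rng _
  exact h1.comp_clm (((Sn α β γ n).orthogonalProjectionOnto).comp (JW α β γ))

theorem polyH_dense (α β γ : ℝ) [Par α β γ] : DenseRange (polyH α β γ) := by
  rw [Metric.denseRange_iff]
  intro f ε hε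
  have hd := BoundedContinuousFunction.toLp_denseRange (p := 2) ℝ (muT α β γ) ℝ (by simp)
  obtain ⟨b, hb⟩ := Metric.denseRange_iff.1 hd f (ε / 2) (by linarith)
  let A : Poly2 →ₐ[ℝ] C(ℝ × ℝ, ℝ) := MvPolynomial.aeval ![⟨Prod.fst, continuous_fst⟩, ⟨Prod.snd, continuous_snd⟩]
  have hA : ∀ p x, A p x = pev p x := by
    intro p x
    induction p using MvPolynomial.induction_on with
    | C a => simp [A, pev]
    | add p q hp hq => rw [map_add, ContinuousMap.add_apply, hp, hq, pev_add]
    | mul_X p i hp =>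
      rw [map_mul, ContinuousMap.mul_apply, hp, pev_mul]
      fin_cases i <;> simp [A, pev]
  have hsep : A.range.SeparatesPoints := by
    intro x y hxy
    by_cases h : x.1 = y.1
    · refine ⟨_, ⟨A (MvPolynomial.X 1), ⟨_, rfl⟩, rfl⟩, ?_⟩
      simp only [hA, pev_X1]
      intro h2; exact hxy (Prod.ext h h2)
    · refine ⟨_, ⟨A (MvPolynomial.X 0), ⟨_, rfl⟩, rfl⟩, ?_⟩
      simpa only [hA, pev_X0] using h
  set M := (measureUnivNNReal (muT α β γ) : ℝ) ^ (ENNReal.toReal 2)⁻¹ with hM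
  have hM0 : 0 ≤ M := by positivity
  have hK : IsCompact (Set.Icc (0:ℝ) 1 ×ˢ Set.Icc (0:ℝ) 1) := isCompact_Icc.prod isCompact_Icc
  have hδ : 0 < ε / (2 * (M + 1)) := by positivity
  obtain ⟨g, ⟨p, hg⟩, hgK⟩ :=
    ContinuousMap.exists_mem_subalgebra_near_continuous_of_isCompact_of_separatesPoints hsep
      b.toContinuousMap hK hδ
  refine ⟨p, ?_⟩
  have hdist : dist (BoundedContinuousFunction.toLp 2 (muT α β γ) ℝ b) (polyH α β γ p) ≤
      M * (ε / (2 * (M + 1))) := by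
    rw [dist_eq_norm, hM]
    refine Lp.norm_le_of_ae_bound hδ.le ?_
    filter_upwards [Lp.coeFn_sub (BoundedContinuousFunction.toLp 2 (muT α β γ) ℝ b) (polyH α β γ p),
      BoundedContinuousFunction.coeFn_toLp (p := 2) (𝕜 := ℝ) (muT α β γ) b, polyH_coe α β γ p,
      ae_muT α β γ (fun x hx => hx)] with x h1 h2 h3 h4
    rw [h1, Pi.sub_apply, h2, h3, norm_sub_rev]
    have := hgK x ⟨⟨h4.1.le, by linarith [h4.1, h4.2.1, h4.2.2]⟩, ⟨h4.2.1.le, by linarith [h4.1, h4.2.1, h4.2.2]⟩⟩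
    rw [← hg] at this
    have e : (A p) x = pev p x := hA p x
    change ‖(A p) x - _‖ < _ at this
    rw [e] at this
    exact this.le
  have h3 : M * (ε / (2 * (M + 1))) ≤ ε / 2 := by
    rw [← mul_div_assoc, div_le_div_iff₀ (by positivity) (by norm_num)]
    nlinarith
  calc dist f _ ≤ _ := dist_triangle _ _ _
    _ < ε := by linarith

theorem JW_dense (α β γ : ℝ) [Par α β γ] : DenseRange (JW α β γ) := by
  refine (polyH_dense α β γ).mono ?_
  rintro _ ⟨p, rfl⟩
  refine ⟨⟨polyF α β γ p, Submodule.le_topologicalClosure _ ⟨p, rfl⟩⟩, ?_⟩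
  exact JJ_polyF p

theorem polyH_inj (α β γ : ℝ) [Par α β γ] : Function.Injective (polyH α β γ) := by
  rw [← LinearMap.ker_eq_bot, LinearMap.ker_eq_bot']
  intro p hp
  have h1 := polyH_coe α β γ p
  rw [hp] at h1
  have h2 : pev p =ᵐ[muT α β γ] (0 : ℝ × ℝ → ℝ) := h1.symm.trans (Lp.coeFn_zero _ _ _)
  have h3 : pev p =ᵐ[volume.restrict Ttri] (0 : ℝ × ℝ → ℝ) := ae_vol α β γ h2
  have h4 := Measure.eqOn_open_of_ae_eq h3 Ttri_open (pev_continuous p).continuousOn continuousOn_const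
  refine MvPolynomial.funext_set (fun _ => Set.Ioo (0:ℝ) (1/2)) (fun _ => Set.Ioo_infinite (by norm_num)) ?_
  intro x hx
  have m0 := hx 0 trivial
  have m1 := hx 1 trivial
  have h5 : pev p (x 0, x 1) = 0 := h4 (show (x 0, x 1) ∈ Ttri from
    ⟨m0.1, m1.1, by have := m0.2; have := m1.2; simp only; linarith⟩)
  have e : ![x 0, x 1] = x := by ext i; fin_cases i <;> rfl
  simpa [pev, e] using h5

theorem HH_inf (α β γ : ℝ) [Par α β γ] : ¬ FiniteDimensional ℝ (HH α β γ) := by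
  intro h
  have : Module.Finite ℝ Poly2 := Module.Finite.of_injective _ (polyH_inj α β γ)
  have h2 := Module.Finite.finite_basis (MvPolynomial.basisMonomials (Fin 2) ℝ)
  exact not_finite (Fin 2 →₀ ℕ)

theorem splitF {α β γ : ℝ} (F : HF α β γ) {u : ℝ × ℝ → ℝ} {g : ℝ × ℝ → ℝ × ℝ}
    (hu : Measurable u)
    (hF : F =ᵐ[muT α β γ] fun x => Fv x (u x) (g x)) :
    MemLp u 2 (muT α β γ) ∧ Integrable (fun x => bP x (g x) (g x)) (muT α β γ) := by
  have h0 := (Lp.memLp F).ae_eq hF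
  have h1 : MemLp u 2 (muT α β γ) := by
    refine h0.mono hu.aestronglyMeasurable (Eventually.of_forall fun x => ?_)
    have := invU_norm_le x (Fv x (u x) (g x))
    rwa [invU_Fv] at this
  refine ⟨h1, ?_⟩
  have h2 := (memLp_two_iff_integrable_sq_norm h0.1).1 h0
  have h3 := h2.sub (Vu_int α β γ h1.integrable_sq)
  refine h3.congr (ae_muT α β γ fun x hx => ?_)
  simp only [Pi.sub_apply]
  rw [← real_inner_self_eq_norm_sq, Fv_inner hx]; ring

theorem innerF_split {α β γ : ℝ} (F G : HF α β γ) {u v : ℝ × ℝ → ℝ} {g h : ℝ × ℝ → ℝ × ℝ}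
    (hu : Measurable u) (hv : Measurable v)
    (hF : F =ᵐ[muT α β γ] fun x => Fv x (u x) (g x))
    (hG : G =ᵐ[muT α β γ] fun x => Fv x (v x) (h x)) :
    inner ℝ F G = ∫ x, VV x * (u x * v x) ∂(muT α β γ) + ∫ x, bP x (g x) (h x) ∂(muT α β γ) := by
  rw [innerF F G hF hG]
  have h1 := Vu_int α β γ ((splitF F hu hF).1.integrable_mul (splitF G hv hG).1)
  refine integral_add h1 ?_
  have h2 := (L2.integrable_inner (𝕜 := ℝ) F G).sub h1
  refine h2.congr ?_
  filter_upwards [hF, hG, ae_muT α β γ fun x hx => Fv_inner hx (u x) (v x) (g x) (h x)] with x h1 h2 h3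
  simp only [Pi.sub_apply, Pi.mul_apply]
  rw [h1, h2, h3]; ring

theorem normF_split {α β γ : ℝ} (F : HF α β γ) {u : ℝ × ℝ → ℝ} {g : ℝ × ℝ → ℝ × ℝ}
    (hu : Measurable u)
    (hF : F =ᵐ[muT α β γ] fun x => Fv x (u x) (g x)) :
    (∫ x, u x ^ 2 ∂(muT α β γ) + ∫ x, bP x (g x) (g x) ∂(muT α β γ)) ≤ ‖F‖ ^ 2 ∧
    ‖F‖ ^ 2 ≤ 4 * (∫ x, u x ^ 2 ∂(muT α β γ) + ∫ x, bP x (g x) (g x) ∂(muT α β γ)) := by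
  rw [← real_inner_self_eq_norm_sq, innerF_split F F hu hu hF hF]
  obtain ⟨h1, h2⟩ := splitF F hu hF
  have h3 := h1.integrable_sq
  have h4 := Vu_int α β γ h3
  have e : ∀ x, VV x * (u x * u x) = VV x * u x ^ 2 := fun x => by ring
  simp only [e]
  have h5 : 0 ≤ ∫ x, bP x (g x) (g x) ∂(muT α β γ) :=
    integral_nonneg_of_ae (ae_muT α β γ fun x hx => bP_nonneg hx _)
  have h6 : ∫ x, u x ^ 2 ∂(muT α β γ) ≤ ∫ x, VV x * u x ^ 2 ∂(muT α β γ) :=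
    integral_mono h3 h4 fun x => by
      have := VV_ge x
      simp only; nlinarith [sq_nonneg (u x)]
  have h7 : ∫ x, VV x * u x ^ 2 ∂(muT α β γ) ≤ ∫ x, 4 * u x ^ 2 ∂(muT α β γ) :=
    integral_mono_ae h4 (h3.const_mul 4) (ae_muT α β γ fun x hx => by
      have := VV_le hx
      simp only; nlinarith [sq_nonneg (u x)])
  rw [integral_const_mul] at h7
  constructor <;> linarith

noncomputable def uF {α β γ : ℝ} (F : HF α β γ) (x : ℝ × ℝ) : ℝ := invU x (F x)
noncomputable def gF {α β γ : ℝ} (F : HF α β γ) (x : ℝ × ℝ) : ℝ × ℝ := invG x (F x)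

theorem uF_meas {α β γ : ℝ} (F : HF α β γ) : Measurable (uF F) :=
  invU_meas (Lp.stronglyMeasurable F).measurable

theorem gF_meas {α β γ : ℝ} (F : HF α β γ) : Measurable (gF F) :=
  invG_meas (Lp.stronglyMeasurable F).measurable

theorem F_rep {α β γ : ℝ} (F : HF α β γ) :
    F =ᵐ[muT α β γ] fun x => Fv x (uF F x) (gF F x) :=
  ae_muT α β γ fun x hx => (Fv_inv hx (F x)).symm

theorem sub_rep {α β γ : ℝ} (F G : HF α β γ) {u v : ℝ × ℝ → ℝ} {g h : ℝ × ℝ → ℝ × ℝ}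
    (hF : F =ᵐ[muT α β γ] fun x => Fv x (u x) (g x))
    (hG : G =ᵐ[muT α β γ] fun x => Fv x (v x) (h x)) :
    ((F - G : HF α β γ) : ℝ × ℝ → E3) =ᵐ[muT α β γ] fun x => Fv x (u x - v x) (g x - h x) := by
  filter_upwards [Lp.coeFn_sub F G, hF, hG] with x h1 h2 h3
  rw [h1, Pi.sub_apply, h2, h3, Fv_sub]

theorem int_sq (α β γ : ℝ) (u : ℝ × ℝ → ℝ) :
    ∫ x in Ttri, u x ^ 2 * rhoT α β γ x = ∫ x, u x ^ 2 ∂(muT α β γ) := by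
  rw [integral_muT]; simp only [mul_comm]

theorem weakF {α β γ : ℝ} [Par α β γ] {F : HF α β γ} (hF : F ∈ WW α β γ) (v w : Poly2) :
    ∫ x, uF F x * pev (Epol α β γ v w) x ∂(muT α β γ) +
      ∫ x, bP x (gF F x) (pev v x, pev w x) ∂(muT α β γ) = 0 := by
  have hm := contF_memLp α β γ (u := fun _ => 0) (g := fun x => (pev v x, pev w x))
    continuous_const ((pev_continuous _).prodMk (pev_continuous _))
  have hG := hm.coeFn_toLp
  set G : HF α β γ := hm.toLp _
  have key : ∀ (F : HF α β γ) {u : ℝ × ℝ → ℝ} {g : ℝ × ℝ → ℝ × ℝ},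
    (F =ᵐ[muT α β γ] fun x => Fv x (u x) (g x)) →
      inner ℝ (JJ α β γ F) (polyH α β γ (Epol α β γ v w)) + inner ℝ F G =
      ∫ x, u x * pev (Epol α β γ v w) x ∂(muT α β γ) +
      ∫ x, bP x (g x) (pev v x, pev w x) ∂(muT α β γ) := by
    intro F u g hF
    rw [innerF F G hF hG, L2.inner_def]
    congr 1
    · refine integral_congr_ae ?_
      filter_upwards [JJ_coe F, hF, polyH_coe α β γ (Epol α β γ v w)] with x h1 h2 h3
      rw [h1, h2, h3, invU_Fv]; simp [mul_comm]
    · simp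
  rw [← key F (F_rep F)]
  refine WW_closed_ind (P := fun F =>
    inner ℝ (JJ α β γ F) (polyH α β γ (Epol α β γ v w)) + inner ℝ F G = 0) ?_ ?_ hF
  · exact isClosed_eq (by fun_prop) (by fun_prop)
  · intro p
    rw [key _ (polyF_coe α β γ p)]
    exact weakE p v w

theorem memW_of {α β γ : ℝ} [Par α β γ] {F : HF α β γ} (hF : F ∈ WW α β γ) :
    MemW Ttri (rhoT α β γ) q11 q12 q12 q22 (uF F) (gF F) := by
  obtain ⟨h1, h2⟩ := splitF F (uF_meas F) (F_rep F)
  refine ⟨⟨uF_meas F, ?_⟩, ⟨⟨gF_meas F, ?_⟩, ?_⟩, ?_⟩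
  · have := (integrable_muT α β γ _).1 h1.integrable_sq
    simpa only [mul_comm] using this
  · exact (integrable_muT α β γ _).1 h2
  · intro v w
    have := weakF hF v w
    rw [integral_muT, integral_muT] at this
    rw [← eq_neg_of_add_eq_zero_left this]
    refine setIntegral_congr_fun Ttri_meas fun x hx => ?_
    simp only [divRhoPhi_eq α β γ v w hx]; ring
  · intro ε hε
    have hF' : F ∈ closure ((LinearMap.range (polyF α β γ) : Submodule ℝ (HF α β γ)) : Set (HF α β γ)) := hF
    obtain ⟨_, ⟨q, rfl⟩, hq⟩ := Metric.mem_closure_iff.1 hF' ε hε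
    refine ⟨q, ?_⟩
    rw [dist_eq_norm] at hq
    have := (normF_split (F - polyF α β γ q) ((uF_meas F).sub (pev_continuous q).measurable)
      (sub_rep F _ (F_rep F) (polyF_coe α β γ q))).1
    rw [integral_muT, integral_muT] at this
    simp only [mul_comm (rhoT α β γ _) ((_ : ℝ) ^ 2)] at this
    refine this.trans_lt ?_
    have := norm_nonneg (F - polyF α β γ q)
    gcongr

theorem of_memW {α β γ : ℝ} [Par α β γ] {v : ℝ × ℝ → ℝ} {h : ℝ × ℝ → ℝ × ℝ}
    (hW : MemW Ttri (rhoT α β γ) q11 q12 q12 q22 v h) :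
    ∃ Z ∈ WW α β γ, Z =ᵐ[muT α β γ] fun x => Fv x (v x) (h x) := by
  obtain ⟨⟨mv, iv⟩, ⟨⟨mh, ih⟩, -⟩, ha⟩ := hW
  have iv' : Integrable (fun x => v x ^ 2) (muT α β γ) := by
    rw [integrable_muT]; simpa only [mul_comm] using iv
  have ih' : Integrable (fun x => bP x (h x) (h x)) (muT α β γ) := (integrable_muT _ _ _ _).2 ih
  have hm := memF α β γ mv mh iv' ih'
  refine ⟨hm.toLp _, ?_, hm.coeFn_toLp⟩
  change _ ∈ closure ((LinearMap.range (polyF α β γ) : Submodule ℝ (HF α β γ)) : Set (HF α β γ))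
  rw [Metric.mem_closure_iff]
  intro ε hε
  obtain ⟨q, hq⟩ := ha (ε / 2) (by linarith)
  refine ⟨_, ⟨q, rfl⟩, ?_⟩
  have := (normF_split (hm.toLp _ - polyF α β γ q) (mv.sub (pev_continuous q).measurable)
      (sub_rep _ _ hm.coeFn_toLp (polyF_coe α β γ q))).2
  rw [integral_muT, integral_muT] at this
  simp only [mul_comm (rhoT α β γ _) ((_ : ℝ) ^ 2)] at this
  rw [dist_eq_norm]
  refine lt_of_pow_lt_pow_left₀ 2 hε.le (this.trans_lt ?_)
  have e : ε ^ 2 = 4 * (ε / 2) ^ 2 := by ring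
  rw [e]
  exact mul_lt_mul_of_pos_left hq (by norm_num)

theorem innerJ {α β γ : ℝ} (F G : HF α β γ) {u v : ℝ × ℝ → ℝ} {g h : ℝ × ℝ → ℝ × ℝ}
    (hF : F =ᵐ[muT α β γ] fun x => Fv x (u x) (g x))
    (hG : G =ᵐ[muT α β γ] fun x => Fv x (v x) (h x)) :
    inner ℝ (JJ α β γ F) (JJ α β γ G) = ∫ x in Ttri, u x * v x * rhoT α β γ x := by
  rw [L2.inner_def]
  have : ∀ x, u x * v x * rhoT α β γ x = rhoT α β γ x * (u x * v x) := fun x => by ring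
  simp only [this]
  rw [← integral_muT]
  refine integral_congr_ae ?_
  filter_upwards [JJ_coe F, hF, JJ_coe G, hG] with x h1 h2 h3 h4
  rw [h1, h2, h3, h4, invU_Fv, invU_Fv]; simp [mul_comm]

theorem sum_rep {α β γ : ℝ} (Y : ℕ → HF α β γ) (c : ℕ → ℝ) (N : ℕ) :
    ((∑ i ∈ Finset.range N, c i • JJ α β γ (Y i) : HH α β γ) : ℝ × ℝ → ℝ) =ᵐ[muT α β γ]
      fun x => ∑ i ∈ Finset.range N, c i * uF (Y i) x := by
  induction N with
  | zero =>
    simp only [Finset.range_zero, Finset.sum_empty]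
    exact Lp.coeFn_zero ℝ 2 (muT α β γ)
  | succ N ih =>
    rw [Finset.sum_range_succ]
    filter_upwards [Lp.coeFn_add (∑ i ∈ Finset.range N, c i • JJ α β γ (Y i)) (c N • JJ α β γ (Y N)),
      Lp.coeFn_smul (c N) (JJ α β γ (Y N)), JJ_coe (Y N), ih] with x h1 h2 h3 h4
    rw [h1, Pi.add_apply, h2, Pi.smul_apply, h3, h4, Finset.sum_range_succ]
    rfl

/-- `L²(T,ρ)` has an orthogonal basis of weak eigenfunctions of the
degenerate Helmholtz operator; the eigenvalues are positive and (suitably ordered) tend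
to `+∞`. -/
theorem eigenfunction_basis
    (α β γ : ℝ) (hα : -1 < α) (hβ : -1 < β) (hγ : -1 < γ) :
    ∃ (u : ℕ → ℝ × ℝ → ℝ) (g : ℕ → ℝ × ℝ → ℝ × ℝ) (ν : ℕ → ℝ),
      (∀ n, MemW Ttri (rhoT α β γ) q11 q12 q12 q22 (u n) (g n)) ∧
      (∀ n, ¬ (u n =ᵐ[volume.restrict Ttri] (0 : ℝ × ℝ → ℝ))) ∧
      (∀ m n, m ≠ n → (∫ x in Ttri, u m x * u n x * rhoT α β γ x) = 0) ∧
      (∀ n, ∀ (v : ℝ × ℝ → ℝ) (h : ℝ × ℝ → ℝ × ℝ),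
        MemW Ttri (rhoT α β γ) q11 q12 q12 q22 v h →
          (∫ x in Ttri, rhoT α β γ x * bilPhi q11 q12 q12 q22 x (h x) (g n x)) +
              (∫ x in Ttri, (2 + x.1 ^ 2 + x.2 ^ 2) * u n x * v x * rhoT α β γ x) =
            ν n * ∫ x in Ttri, u n x * v x * rhoT α β γ x) ∧
      (∀ n, 0 < ν n) ∧ Monotone ν ∧ Tendsto ν atTop atTop ∧
      (∀ f : ℝ × ℝ → ℝ, MemL2 Ttri (rhoT α β γ) f → ∀ ε : ℝ, 0 < ε →
        ∃ (N : ℕ) (c : ℕ → ℝ),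
          (∫ x in Ttri, (f x - ∑ i ∈ Finset.range N, c i * u i x) ^ 2 * rhoT α β γ x)
            < ε ^ 2) := by

  have hpar : Par α β γ := ⟨hα, hβ, hγ⟩
  obtain ⟨y, ν, hon, heig, hpos, hmono, htend, hspan⟩ :=
    abstract_basis (JW α β γ) (JW_compact α β γ) (JW_dense α β γ) (HH_inf α β γ)
  have hin : ∀ m n, inner ℝ (JW α β γ (y m)) (JW α β γ (y n)) =
      ∫ x in Ttri, uF (y m : HF α β γ) x * uF (y n : HF α β γ) x * rhoT α β γ x :=
    fun m n => innerJ _ _ (F_rep _) (F_rep _)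
  refine ⟨fun n => uF (y n : HF α β γ), fun n => gF (y n : HF α β γ), ν,
    fun n => memW_of (y n).2, ?_, ?_, ?_, hpos, hmono, htend, ?_⟩
  · intro n h0
    have h1 := hin n n
    have h2 : ∫ x in Ttri, uF (y n : HF α β γ) x * uF (y n : HF α β γ) x * rhoT α β γ x = 0 := by
      refine integral_eq_zero_of_ae ?_
      filter_upwards [h0] with x hx
      rw [hx]; simp
    rw [h2, real_inner_self_eq_norm_sq, hon.1 n] at h1
    norm_num at h1
  · intro m n hmn
    rw [← hin m n]
    exact hon.2 hmn
  · intro n v h hW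
    obtain ⟨Z, hZ, hrep⟩ := of_memW hW
    have h1 : inner ℝ (y n : HF α β γ) Z = ν n * inner ℝ (JJ α β γ (y n)) (JJ α β γ Z) :=
      heig n ⟨Z, hZ⟩
    rw [innerJ _ _ (F_rep _) hrep, innerF_split _ _ (uF_meas _) hW.1.1 (F_rep _) hrep,
      integral_muT, integral_muT, add_comm] at h1
    rw [← h1]
    congr 1
    · refine integral_congr_ae (Eventually.of_forall fun x => ?_)
      simp only
      congr 1
      exact bP_symm _ _ _
    · refine integral_congr_ae (Eventually.of_forall fun x => ?_)
      simp only [VV]; ring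
  · intro f hf ε hε
    have hfm : MemLp f 2 (muT α β γ) := by
      rw [memLp_two_iff_integrable_sq hf.1.aestronglyMeasurable, integrable_muT]
      simpa only [mul_comm] using hf.2
    have hmem : hfm.toLp f ∈ (Submodule.span ℝ (Set.range fun n => JW α β γ (y n))).topologicalClosure := by
      rw [hspan]; trivial
    obtain ⟨s, hs, hd⟩ := Metric.mem_closure_iff.1 hmem ε hε
    obtain ⟨c, hc⟩ := Finsupp.mem_span_range_iff_exists_finsupp.1 hs
    refine ⟨c.support.sup id + 1, c, ?_⟩
    have hs2 : s = ∑ i ∈ Finset.range (c.support.sup id + 1), c i • JJ α β γ (y i : HF α β γ) := by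
      rw [← hc, Finsupp.sum]
      refine Finset.sum_subset ?_ ?_
      · intro i hi
        rw [Finset.mem_range]
        exact Nat.lt_succ_of_le (Finset.le_sup (f := id) hi)
      · intro i _ hi
        rw [Finsupp.notMem_support_iff.1 hi, zero_smul]
    have hr := sum_rep (fun i => (y i : HF α β γ)) c (c.support.sup id + 1)
    rw [← hs2] at hr
    rw [int_sq]
    rw [dist_eq_norm] at hd
    have hn : ‖hfm.toLp f - s‖ ^ 2 = ∫ x, (f x - ∑ i ∈ Finset.range (c.support.sup id + 1),
        c i * uF (y i : HF α β γ) x) ^ 2 ∂(muT α β γ) := by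
      rw [← real_inner_self_eq_norm_sq, L2.inner_def]
      refine integral_congr_ae ?_
      filter_upwards [Lp.coeFn_sub (hfm.toLp f) s, hfm.coeFn_toLp, hr] with x h1 h2 h3
      rw [h1, Pi.sub_apply, h2, h3]
      simp [sq]
    rw [← hn]
    have := norm_nonneg (hfm.toLp f - s)
    gcongr
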